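/- arXiv:math/9903192 — 3 statements merged into one kernel-verified Lean document; each statement's English description precedes it below -/
import Mathlib

section
/- Let D be a nonempty minimal Enriques diagram with exactly one root and cod(D) ≤ 10. Then D is isomorphic to one of the following diagrams: A_1, …, A_10, D_4, …, D_10, J_{2,0}, J_{2,1}, E_6, E_7, E_8, X_{1,0}, X_{1,1}, X_{1,2}, Z_{11}, Y_{1,1}. -/
open Classical Finset

/-- The raw data of a finite weighted forest equipped with a proximity relation.
The vertices are the elements of `Fin n`; `parent v` is the immediate predecessor of `v`
(`none` iff `v` is a root); `wt v` is the weight of `v`; and `prox a b` means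
that `a` is proximate to `b`. -/
structure PreDiagram where
  n : ℕ
  parent : Fin n → Option (Fin n)
  wt : Fin n → ℕ
  prox : Fin n → Fin n → Prop

namespace PreDiagram

variable (D : PreDiagram)

/-- `a` is the immediate predecessor of `b`. -/
def ImPred (a b : Fin D.n) : Prop := D.parent b = some a

/-- `a` is a predecessor of `b` (reflexive-transitive closure of `ImPred`). -/
def Pred (a b : Fin D.n) : Prop := Relation.ReflTransGen D.ImPred a b

/-- `a` is a proper predecessor of `b`. -/
def ProperPred (a b : Fin D.n) : Prop := Relation.TransGen D.ImPred a b

/-- `a` is a remote predecessor of `b`: a proper but not immediate predecessor. -/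
def RemotePred (a b : Fin D.n) : Prop := D.ProperPred a b ∧ ¬ D.ImPred a b

def IsRoot (v : Fin D.n) : Prop := D.parent v = none

/-- A leaf is a vertex with no proper successor. -/
def IsLeaf (v : Fin D.n) : Prop := ∀ w, ¬ D.ImPred v w

/-- `a` is remotely proximate to `b`: proximate to `b`, and `b` is a remote predecessor. -/
def RemoteProx (a b : Fin D.n) : Prop := D.prox a b ∧ D.RemotePred b a

/-- A satellite is a vertex proximate to a remote predecessor. -/
def IsSatellite (v : Fin D.n) : Prop := ∃ t, D.RemoteProx v t

/-- A free vertex is one that is not a satellite. -/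
def IsFree (v : Fin D.n) : Prop := ¬ D.IsSatellite v

/-- The laws of a minimal Enriques diagram. -/
structure IsMED : Prop where
  /-- The graph is a forest: no vertex is a proper predecessor of itself. -/
  forest : ∀ v, ¬ D.ProperPred v v
  /-- Every weight is at least `1`. -/
  wt_pos : ∀ v, 1 ≤ D.wt v
  /-- Law of Proximity: a root is proximate to no vertex. -/
  root_not_prox : ∀ v, D.IsRoot v → ∀ w, ¬ D.prox v w
  /-- Law of Proximity: a non-root is proximate to its immediate predecessor. -/
  prox_parent : ∀ v u, D.parent v = some u → D.prox v u
  /-- Law of Proximity: any other vertex a non-root is proximate to is a remote predecessor. -/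
  prox_remote : ∀ v u w, D.parent v = some u → D.prox v w → w ≠ u → D.RemotePred w v
  /-- Law of Proximity: a non-root is proximate to at most one vertex other than its
  immediate predecessor. -/
  prox_unique : ∀ v u w w', D.parent v = some u → D.prox v w → D.prox v w' →
      w ≠ u → w' ≠ u → w = w'
  /-- Law of Proximity: if `a` is proximate to `b` and `c` lies properly between them,
  then `c` is proximate to `b`. -/
  prox_between : ∀ a b c, D.prox a b → D.ProperPred b c → D.ProperPred c a → D.prox c b
  /-- Proximity Inequality. -/
  prox_ineq : ∀ v, ∑ w ∈ univ.filter (fun w => D.prox w v), D.wt w ≤ D.wt v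
  /-- Law of Succession: a vertex `v` has at most `wt v` immediate successors. -/
  succ_card : ∀ v, (univ.filter (fun w => D.ImPred v w)).card ≤ D.wt v
  /-- Law of Succession: at most two immediate successors are satellites. -/
  succ_sat : ∀ v w₁ w₂ w₃, D.ImPred v w₁ → D.ImPred v w₂ → D.ImPred v w₃ →
      D.IsSatellite w₁ → D.IsSatellite w₂ → D.IsSatellite w₃ →
      w₁ ≠ w₂ → w₁ ≠ w₃ → w₂ ≠ w₃ → False
  /-- Law of Succession: two distinct immediate successors of the same vertex cannot be
  satellites of the same vertex. -/
  succ_sat_diff : ∀ v w₁ w₂ t, D.ImPred v w₁ → D.ImPred v w₂ → w₁ ≠ w₂ →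
      D.RemoteProx w₁ t → D.RemoteProx w₂ t → False
  /-- Law of Minimality: every leaf of weight `1` is a satellite. -/
  minimal : ∀ v, D.IsLeaf v → D.wt v = 1 → D.IsSatellite v

/-- The number of roots. -/
noncomputable def rts : ℕ := (univ.filter (fun v => D.IsRoot v)).card

/-- The number of free vertices. -/
noncomputable def frs : ℕ := (univ.filter (fun v => D.IsFree v)).card

/-- `dim D = rts D + frs D`. -/
noncomputable def dimD : ℕ := D.rts + D.frs

/-- `deg D = Σ_V C(m_V + 1, 2)`. -/
def degD : ℕ := ∑ v, (D.wt v + 1).choose 2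

/-- `cod D = deg D - dim D`. -/
noncomputable def cod : ℤ := (D.degD : ℤ) - (D.dimD : ℤ)

/-- `δ(D) = Σ_V C(m_V, 2)`. -/
def deltaD : ℕ := ∑ v, (D.wt v).choose 2

/-- `r(D) = Σ_V (m_V - Σ_{W ≻ V} m_W)`. -/
noncomputable def rCh : ℤ :=
  ∑ v, ((D.wt v : ℤ) - ∑ w ∈ univ.filter (fun w => D.prox w v), (D.wt w : ℤ))

/-- `μ(D) = 2 δ(D) - r(D) + rts D`. -/
noncomputable def mu : ℤ := 2 * (D.deltaD : ℤ) - D.rCh + (D.rts : ℤ)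

/-- An isomorphism of diagrams: a weight-preserving bijection of the vertices preserving
the immediate-predecessor and proximity relations. -/
structure Iso (D₁ D₂ : PreDiagram) where
  toEquiv : Fin D₁.n ≃ Fin D₂.n
  wt_eq : ∀ v, D₂.wt (toEquiv v) = D₁.wt v
  imPred_iff : ∀ a b, D₂.ImPred (toEquiv a) (toEquiv b) ↔ D₁.ImPred a b
  prox_iff : ∀ a b, D₂.prox (toEquiv a) (toEquiv b) ↔ D₁.prox a b

def Isomorphic (D₁ D₂ : PreDiagram) : Prop := Nonempty (Iso D₁ D₂)

/-- A realization of `D'` as a subdiagram of `D`: an injection of the vertices such that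
the weight of a vertex of `D'` is at most its weight in `D`, and the succession
(predecessor) and proximity relations of `D'` are the ones induced from `D`. -/
structure Subdiagram (D' D : PreDiagram) where
  toFun : Fin D'.n → Fin D.n
  inj : Function.Injective toFun
  wt_le : ∀ v, D'.wt v ≤ D.wt (toFun v)
  pred_iff : ∀ a b, D'.Pred a b ↔ D.Pred (toFun a) (toFun b)
  prox_iff : ∀ a b, D'.prox a b ↔ D.prox (toFun a) (toFun b)

def IsSubdiagram (D' D : PreDiagram) : Prop := Nonempty (Subdiagram D' D)

/-- The parent function of a chain `0 → 1 → ⋯ → n-1`. -/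
def chainParent (n : ℕ) (v : Fin n) : Option (Fin n) :=
  if v.val = 0 then none
  else some ⟨v.val - 1, lt_of_le_of_lt (Nat.sub_le _ _) v.isLt⟩

/-- The diagram `A_k` (`k ≥ 1`): for `k = 2i-1`, a chain of `i` free vertices of weight `2`;
for `k = 2i`, such a chain followed by a chain of two vertices of weight `1`, both
proximate to the `i`-th weight-`2` vertex. -/
def diagA (k : ℕ) : PreDiagram where
  n := if k % 2 = 0 then k / 2 + 2 else (k + 1) / 2
  parent := chainParent _
  wt := fun v => if v.val < (k + 1) / 2 then 2 else 1
  prox := fun a b => a.val = b.val + 1 ∨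
    (k % 2 = 0 ∧ a.val = k / 2 + 1 ∧ b.val + 1 = k / 2)

/-- The diagram `D_k` (`k ≥ 4`): a root of weight `3`, followed by nothing if `k = 4`,
by two vertices of weight `1` both proximate to the root if `k = 5`, and by the diagram
`A_{k-5}` if `k ≥ 6`. -/
def diagD (k : ℕ) : PreDiagram where
  n := (k - 4) / 2 + (if k % 2 = 0 then 1 else 3)
  parent := chainParent _
  wt := fun v => if v.val = 0 then 3 else if v.val ≤ (k - 4) / 2 then 2 else 1
  prox := fun a b => a.val = b.val + 1 ∨
    (k % 2 = 1 ∧ a.val = (k - 4) / 2 + 2 ∧ b.val = (k - 4) / 2)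

/-- The diagram `E_{6l+j}` (`l ≥ 1`, `j ∈ {0,1,2}`), with argument `m = 6l + j`. -/
def diagE (m : ℕ) : PreDiagram where
  n := m / 6 + (if m % 6 = 1 then 2 else 3)
  parent := chainParent _
  wt := fun v => if v.val < m / 6 then 3 else
    if 1 ≤ m % 6 ∧ v.val = m / 6 then 2 else 1
  prox := fun a b => a.val = b.val + 1 ∨
    (m % 6 = 0 ∧ (a.val = m / 6 + 1 ∨ a.val = m / 6 + 2) ∧ b.val + 1 = m / 6) ∨
    (m % 6 = 1 ∧ a.val = m / 6 + 1 ∧ b.val + 1 = m / 6) ∨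
    (m % 6 = 2 ∧ ((a.val = m / 6 + 1 ∧ b.val + 1 = m / 6) ∨
                  (a.val = m / 6 + 2 ∧ b.val = m / 6)))

/-- The diagram `J_{l,k}` (`l ≥ 2`, `k ≥ 0`): a chain of `l - 1` free vertices of weight `3`
followed by the diagram `D_{k+4}`. -/
def diagJ (l k : ℕ) : PreDiagram where
  n := (l - 1) + k / 2 + (if k % 2 = 0 then 1 else 3)
  parent := chainParent _
  wt := fun v => if v.val ≤ l - 1 then 3 else if v.val ≤ l - 1 + k / 2 then 2 else 1
  prox := fun a b => a.val = b.val + 1 ∨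
    (k % 2 = 1 ∧ a.val = (l - 1) + k / 2 + 2 ∧ b.val = (l - 1) + k / 2)

/-- The diagram `X_{1,0}`: a single root of weight `4`. -/
def diagX10 : PreDiagram where
  n := 1
  parent := chainParent _
  wt := fun _ => 4
  prox := fun a b => a.val = b.val + 1

/-- The diagram `X_{1,1}`: a root of weight `4` followed by a chain of two vertices of
weight `1`, both proximate to the root. -/
def diagX11 : PreDiagram where
  n := 3
  parent := chainParent _
  wt := fun v => if v.val = 0 then 4 else 1
  prox := fun a b => a.val = b.val + 1 ∨ (a.val = 2 ∧ b.val = 0)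

/-- The diagram `X_{1,2}`: a root of weight `4` followed by one free vertex of weight `2`. -/
def diagX12 : PreDiagram where
  n := 2
  parent := chainParent _
  wt := fun v => if v.val = 0 then 4 else 2
  prox := fun a b => a.val = b.val + 1

/-- The diagram `Z_{11}`: a root of weight `4` followed by a chain of three vertices of
weight `1`, all proximate to the root. -/
def diagZ11 : PreDiagram where
  n := 4
  parent := chainParent _
  wt := fun v => if v.val = 0 then 4 else 1
  prox := fun a b => a.val = b.val + 1 ∨ ((a.val = 2 ∨ a.val = 3) ∧ b.val = 0)

/-- The diagram `Y_{1,1}`: a root of weight `4` with two immediate free successors of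
weight `1`, each of which has one immediate successor of weight `1` that is remotely
proximate to the root. -/
def diagY11 : PreDiagram where
  n := 5
  parent := fun v =>
    if v.val = 0 then none
    else if v.val ≤ 2 then some ⟨0, by omega⟩
    else if v.val = 3 then some ⟨1, by omega⟩
    else some ⟨2, by omega⟩
  wt := fun v => if v.val = 0 then 4 else 1
  prox := fun a b => (a.val = 1 ∧ b.val = 0) ∨ (a.val = 2 ∧ b.val = 0) ∨
    (a.val = 3 ∧ (b.val = 1 ∨ b.val = 0)) ∨ (a.val = 4 ∧ (b.val = 2 ∨ b.val = 0))

/-- The disjoint union of two diagrams. -/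
def disjUnion (D₁ D₂ : PreDiagram) : PreDiagram where
  n := D₁.n + D₂.n
  parent := fun v =>
    if h : v.val < D₁.n then
      (D₁.parent ⟨v.val, h⟩).map
        (fun w => ⟨w.val, Nat.lt_of_lt_of_le w.isLt (Nat.le_add_right _ _)⟩)
    else
      (D₂.parent ⟨v.val - D₁.n, by have := v.isLt; omega⟩).map
        (fun w => ⟨D₁.n + w.val, by have := w.isLt; omega⟩)
  wt := fun v =>
    if h : v.val < D₁.n then D₁.wt ⟨v.val, h⟩
    else D₂.wt ⟨v.val - D₁.n, by have := v.isLt; omega⟩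
  prox := fun a b =>
    (∃ (ha : a.val < D₁.n) (hb : b.val < D₁.n), D₁.prox ⟨a.val, ha⟩ ⟨b.val, hb⟩) ∨
    (∃ (_ : D₁.n ≤ a.val) (_ : D₁.n ≤ b.val),
      D₂.prox ⟨a.val - D₁.n, by have := a.isLt; omega⟩
              ⟨b.val - D₁.n, by have := b.isLt; omega⟩)

end PreDiagram

namespace PreDiagram

section Helpers

variable {D : PreDiagram}

theorem sum_prox_le (hD : D.IsMED) (v : Fin D.n) (S : Finset (Fin D.n))
    (hS : ∀ w ∈ S, D.prox w v) : ∑ w ∈ S, D.wt w ≤ D.wt v := by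
  refine le_trans (Finset.sum_le_sum_of_subset ?_) (hD.prox_ineq v)
  intro w hw
  simpa using hS w hw

theorem prox1 (hD : D.IsMED) {v a : Fin D.n} (ha : D.prox a v) : D.wt a ≤ D.wt v := by
  have := sum_prox_le hD v {a} (by simpa using ha)
  simpa using this

theorem prox2 (hD : D.IsMED) {v a b : Fin D.n} (ha : D.prox a v) (hb : D.prox b v)
    (hab : a ≠ b) : D.wt a + D.wt b ≤ D.wt v := by
  have := sum_prox_le hD v {a, b} (by simp [ha, hb])
  rwa [Finset.sum_pair hab] at this

theorem prox3 (hD : D.IsMED) {v a b c : Fin D.n} (ha : D.prox a v) (hb : D.prox b v)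
    (hc : D.prox c v) (hab : a ≠ b) (hac : a ≠ c) (hbc : b ≠ c) :
    D.wt a + D.wt b + D.wt c ≤ D.wt v := by
  have := sum_prox_le hD v {a, b, c} (by simp [ha, hb, hc])
  rw [Finset.sum_insert (by simp [hab, hac]), Finset.sum_pair hbc] at this
  omega

theorem prox4 (hD : D.IsMED) {v a b c d : Fin D.n} (ha : D.prox a v) (hb : D.prox b v)
    (hc : D.prox c v) (hd : D.prox d v) (hab : a ≠ b) (hac : a ≠ c) (had : a ≠ d)
    (hbc : b ≠ c) (hbd : b ≠ d) (hcd : c ≠ d) :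
    D.wt a + D.wt b + D.wt c + D.wt d ≤ D.wt v := by
  have := sum_prox_le hD v {a, b, c, d} (by simp [ha, hb, hc, hd])
  rw [Finset.sum_insert (by simp [hab, hac, had]), Finset.sum_insert (by simp [hbc, hbd]),
    Finset.sum_pair hcd] at this
  omega

theorem imPred_unique {a a' b : Fin D.n} (h : D.ImPred a b) (h' : D.ImPred a' b) : a = a' := by
  unfold ImPred at h h'
  rw [h] at h'
  exact Option.some.inj h'

theorem imPred_prox (hD : D.IsMED) {a b : Fin D.n} (h : D.ImPred a b) : D.prox b a :=
  hD.prox_parent b a h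

theorem prox_cases (hD : D.IsMED) {a b : Fin D.n} (h : D.prox b a) :
    D.ImPred a b ∨ D.RemoteProx b a := by
  by_cases hr : D.IsRoot b
  · exact absurd h (hD.root_not_prox b hr a)
  · obtain ⟨u, hu⟩ := Option.ne_none_iff_exists'.mp hr
    by_cases hau : a = u
    · left; subst hau; exact hu
    · right; exact ⟨h, hD.prox_remote b u a hu h hau⟩

theorem properPred_iff {a b u : Fin D.n} (h : D.ImPred a b) :
    D.ProperPred u b ↔ u = a ∨ D.ProperPred u a := by
  constructor
  · intro hu
    obtain ⟨a', h1, h2⟩ := Relation.TransGen.tail'_iff.mp hu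
    have := imPred_unique h h2
    subst this
    rcases Relation.reflTransGen_iff_eq_or_transGen.mp h1 with h3 | h3
    · left; exact h3.symm
    · right; exact h3
  · rintro (rfl | hu)
    · exact Relation.TransGen.single h
    · exact hu.tail h

/-- The number of proper predecessors. -/
noncomputable def dep (D : PreDiagram) (v : Fin D.n) : ℕ :=
  (univ.filter (fun u => D.ProperPred u v)).card

theorem dep_succ (hD : D.IsMED) {a b : Fin D.n} (h : D.ImPred a b) : D.dep b = D.dep a + 1 := by
  unfold dep
  have : univ.filter (fun u => D.ProperPred u b) =
      insert a (univ.filter (fun u => D.ProperPred u a)) := by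
    ext u
    simp [properPred_iff h]
  rw [this, Finset.card_insert_of_notMem]
  simpa using hD.forest a

theorem dep_lt (hD : D.IsMED) (v : Fin D.n) : D.dep v < D.n := by
  unfold dep
  have h : univ.filter (fun u => D.ProperPred u v) ⊂ univ := by
    refine Finset.ssubset_univ_iff.mpr ?_
    intro h
    have : v ∈ univ.filter (fun u => D.ProperPred u v) := by rw [h]; simp
    exact hD.forest v (by simpa using this)
  simpa using Finset.card_lt_card h

theorem not_properPred_root {R a : Fin D.n} (hR : D.IsRoot R) : ¬ D.ProperPred a R := by
  intro h
  obtain ⟨a', _, h2⟩ := Relation.TransGen.tail'_iff.mp h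
  unfold IsRoot at hR
  unfold ImPred at h2
  rw [hR] at h2
  cases h2

theorem dep_root {R : Fin D.n} (hR : D.IsRoot R) : D.dep R = 0 := by
  unfold dep
  simp [not_properPred_root hR]

theorem exists_parent {v : Fin D.n} (h : ¬ D.IsRoot v) : ∃ u, D.ImPred u v :=
  Option.ne_none_iff_exists'.mp h

theorem root_pred (hD : D.IsMED) {R : Fin D.n}
    (huniq : ∀ v, D.IsRoot v → v = R) : ∀ v, D.Pred R v := by
  have key : ∀ k v, D.dep v = k → D.Pred R v := by
    intro k
    induction k with
    | zero =>
      intro v hv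
      have : D.IsRoot v := by
        by_contra h
        obtain ⟨u, hu⟩ := exists_parent h
        have := dep_succ hD hu
        omega
      rw [huniq v this]
      exact Relation.ReflTransGen.refl
    | succ k ih =>
      intro v hv
      by_cases hr : D.IsRoot v
      · rw [huniq v hr]; exact Relation.ReflTransGen.refl
      · obtain ⟨u, hu⟩ := exists_parent hr
        have := dep_succ hD hu
        exact (ih u (by omega)).tail hu
  exact fun v => key _ v rfl

theorem exists_leaf (hD : D.IsMED) : ∀ v, ∃ l, D.Pred v l ∧ D.IsLeaf l := by
  have key : ∀ k v, D.n - D.dep v ≤ k → ∃ l, D.Pred v l ∧ D.IsLeaf l := by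
    intro k
    induction k with
    | zero => intro v hv; have := dep_lt hD v; omega
    | succ k ih =>
      intro v hv
      by_cases h : D.IsLeaf v
      · exact ⟨v, Relation.ReflTransGen.refl, h⟩
      · unfold IsLeaf at h
        push Not at h
        obtain ⟨w, hw⟩ := h
        have := dep_succ hD hw
        obtain ⟨l, h1, h2⟩ := ih w (by omega)
        exact ⟨l, Relation.ReflTransGen.head hw h1, h2⟩
  exact fun v => key _ v le_rfl

theorem wt_anti (hD : D.IsMED) {a b : Fin D.n} (h : D.Pred a b) : D.wt b ≤ D.wt a := by
  induction h with
  | refl => exact le_rfl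
  | tail _ h2 ih => exact (prox1 hD (imPred_prox hD h2)).trans ih

theorem pred_total {a b c : Fin D.n} (h : D.Pred a c) (h' : D.Pred b c) :
    D.Pred a b ∨ D.Pred b a := by
  induction h with
  | refl => right; exact h'
  | @tail x y h1 h2 ih =>
    rcases Relation.reflTransGen_iff_eq_or_transGen.mp h' with h3 | h3
    · left; rw [← h3]; exact h1.tail h2
    · rcases (properPred_iff h2).mp h3 with h4 | h4
      · left; rw [h4]; exact h1
      · exact ih h4.to_reflTransGen

theorem properPred_of_pred_ne {a b : Fin D.n} (h : D.Pred a b) (hne : a ≠ b) :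
    D.ProperPred a b := by
  rcases Relation.reflTransGen_iff_eq_or_transGen.mp h with h3 | h3
  · exact absurd h3.symm hne
  · exact h3

/-- A free child of `V` has total mass at least two on `V`. -/
theorem free_child (hD : D.IsMED) {V c : Fin D.n} (h : D.ImPred V c) (hf : D.IsFree c) :
    2 ≤ D.wt c ∨ (D.wt c = 1 ∧ ∃ d, D.ImPred c d ∧ D.prox d V) := by
  have hpos := hD.wt_pos c
  by_cases h2 : 2 ≤ D.wt c
  · exact Or.inl h2
  right
  have h1 : D.wt c = 1 := by omega
  refine ⟨h1, ?_⟩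
  obtain ⟨l, hl, hleaf⟩ := exists_leaf hD c
  have hwl := wt_anti hD hl
  have hwl' := hD.wt_pos l
  obtain ⟨t, ht1, ht2, ht3⟩ := hD.minimal l hleaf (by omega)
  have hwt : 2 ≤ D.wt t := by
    obtain ⟨x, hx1, hx2⟩ := Relation.TransGen.head'_iff.mp ht2
    have hxl : x ≠ l := by rintro rfl; exact ht3 hx1
    have := prox2 hD (imPred_prox hD hx1) ht1 hxl
    have := hD.wt_pos x
    omega
  have htc : D.ProperPred t c := by
    rcases pred_total ht2.to_reflTransGen hl with h5 | h5
    · refine properPred_of_pred_ne h5 ?_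
      rintro rfl; omega
    · have := wt_anti hD h5; omega
  have hcl : c ≠ l := by
    rintro rfl
    exact hf ⟨t, ht1, ht2, ht3⟩
  have hcl' := properPred_of_pred_ne hl hcl
  have hct := hD.prox_between l t c ht1 htc hcl'
  have htV : t = V := by
    rcases prox_cases hD hct with h6 | h6
    · exact imPred_unique h6 h
    · exact absurd ⟨t, h6⟩ hf
  subst htV
  obtain ⟨d, hd1, hd2⟩ := Relation.TransGen.head'_iff.mp hcl'
  refine ⟨d, hd1, ?_⟩
  by_cases hdl : d = l
  · rw [hdl]; exact ht1
  · exact hD.prox_between l t d ht1 (htc.tail hd1) (properPred_of_pred_ne hd2 hdl)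

theorem root_free {R : Fin D.n} (hR : D.IsRoot R) : D.IsFree R := by
  rintro ⟨t, _, h, _⟩
  exact not_properPred_root hR h

theorem root_child_free {R c : Fin D.n} (hR : D.IsRoot R) (h : D.ImPred R c) : D.IsFree c := by
  rintro ⟨t, _, h1, h2⟩
  rcases (properPred_iff h).mp h1 with h3 | h3
  · subst h3; exact h2 h
  · exact not_properPred_root hR h3

theorem root_wt (hD : D.IsMED) {R : Fin D.n} (hR : D.IsRoot R) : 2 ≤ D.wt R := by
  by_contra hlt
  have hpos := hD.wt_pos R
  by_cases hl : D.IsLeaf R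
  · exact root_free hR (hD.minimal R hl (by omega))
  · unfold IsLeaf at hl
    push Not at hl
    obtain ⟨c, hc⟩ := hl
    have h1 := prox1 hD (imPred_prox hD hc)
    rcases free_child hD hc (root_child_free hR hc) with h2 | ⟨h2, d, hd, hdR⟩
    · omega
    · have hne : c ≠ d := by
        rintro rfl
        have := dep_succ hD hd
        omega
      have := prox2 hD (imPred_prox hD hc) hdR hne
      have := hD.wt_pos d
      omega

/-- Contribution of a vertex to the codimension. -/
noncomputable def cost (D : PreDiagram) (v : Fin D.n) : ℤ :=
  ((D.wt v + 1).choose 2 : ℤ) - (if D.IsFree v then 1 else 0) - (if D.IsRoot v then 1 else 0)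

theorem sum_cost : ∑ v, D.cost v = D.cod := by
  unfold cost cod degD dimD rts frs
  rw [Finset.sum_sub_distrib, Finset.sum_sub_distrib]
  simp only [Finset.sum_boole]
  push_cast
  ring

theorem choose_mono {a b : ℕ} (h : a ≤ b) : (a + 1).choose 2 ≤ (b + 1).choose 2 :=
  Nat.choose_le_choose 2 (by omega)

theorem choose_bounds (a : ℕ) : (1 ≤ a → 1 ≤ (a + 1).choose 2) ∧ (2 ≤ a → 3 ≤ (a + 1).choose 2) ∧
    (3 ≤ a → 6 ≤ (a + 1).choose 2) ∧ (4 ≤ a → 10 ≤ (a + 1).choose 2) ∧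
    (5 ≤ a → 15 ≤ (a + 1).choose 2) :=
  ⟨fun h => choose_mono (a := 1) h, fun h => choose_mono (a := 2) h,
   fun h => choose_mono (a := 3) h, fun h => choose_mono (a := 4) h,
   fun h => choose_mono (a := 5) h⟩

theorem cost_root {R : Fin D.n} (hD : D.IsMED) (hR : D.IsRoot R) : 1 ≤ D.cost R ∧
    (3 ≤ D.wt R → 4 ≤ D.cost R) ∧ (4 ≤ D.wt R → 8 ≤ D.cost R) ∧
    (5 ≤ D.wt R → 13 ≤ D.cost R) := by
  have h1 := root_wt hD hR
  have h2 := choose_bounds (D.wt R)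
  have h3 : D.cost R = ((D.wt R + 1).choose 2 : ℤ) - 1 - 1 := by
    unfold cost
    simp [root_free hR, hR]
  rw [h3]
  omega

theorem cost_nonroot {v : Fin D.n} (hD : D.IsMED) (hR : ¬ D.IsRoot v) : 0 ≤ D.cost v ∧
    (2 ≤ D.wt v → 2 ≤ D.cost v) ∧ (3 ≤ D.wt v → 5 ≤ D.cost v) ∧ (4 ≤ D.wt v → 9 ≤ D.cost v) := by
  have h1 := hD.wt_pos v
  have h2 := choose_bounds (D.wt v)
  have h3 : D.cost v ≥ ((D.wt v + 1).choose 2 : ℤ) - 1 := by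
    unfold cost
    simp only [hR, if_false]
    split_ifs <;> omega
  omega

theorem cost_sat {v : Fin D.n} (hD : D.IsMED) (hs : D.IsSatellite v) : 1 ≤ D.cost v ∧
    (2 ≤ D.wt v → 3 ≤ D.cost v) := by
  have h1 := hD.wt_pos v
  have h2 := choose_bounds (D.wt v)
  have hR : ¬ D.IsRoot v := fun h => root_free h hs
  have h3 : D.cost v = ((D.wt v + 1).choose 2 : ℤ) := by
    unfold cost
    have : ¬ D.IsFree v := fun h => h hs
    simp [hR, this]
  omega

theorem cost_nonneg (hD : D.IsMED) (v : Fin D.n) : 0 ≤ D.cost v := by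
  by_cases h : D.IsRoot v
  · have := cost_root hD h; omega
  · exact (cost_nonroot hD h).1

theorem sum_cost_le (hD : D.IsMED) (hcod : D.cod ≤ 10) (S : Finset (Fin D.n)) :
    ∑ v ∈ S, D.cost v ≤ 10 := by
  refine le_trans ?_ hcod
  rw [← sum_cost]
  exact Finset.sum_le_sum_of_subset_of_nonneg (Finset.subset_univ _)
    (fun v _ _ => cost_nonneg hD v)

end Helpers

end PreDiagram

namespace PreDiagram

section Branching

variable {D : PreDiagram}

theorem free_free (hD : D.IsMED) {V c₁ c₂ : Fin D.n} (h₁ : D.ImPred V c₁) (h₂ : D.ImPred V c₂)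
    (hne : c₁ ≠ c₂) (f₁ : D.IsFree c₁) (f₂ : D.IsFree c₂) : 4 ≤ D.wt V := by
  have p₁ := imPred_prox hD h₁
  have p₂ := imPred_prox hD h₂
  have hd₁ := dep_succ hD h₁
  have hd₂ := dep_succ hD h₂
  rcases free_child hD h₁ f₁ with h3 | ⟨h3, d₁, hcd₁, hdV₁⟩ <;>
  rcases free_child hD h₂ f₂ with h4 | ⟨h4, d₂, hcd₂, hdV₂⟩
  · have := prox2 hD p₁ p₂ hne; omega
  · have e₂ := dep_succ hD hcd₂
    have := prox3 hD p₁ p₂ hdV₂ hne (by rintro rfl; omega) (by rintro rfl; omega)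
    have := hD.wt_pos d₂
    omega
  · have e₁ := dep_succ hD hcd₁
    have := prox3 hD p₁ p₂ hdV₁ hne (by rintro rfl; omega) (by rintro rfl; omega)
    have := hD.wt_pos d₁
    omega
  · have e₁ := dep_succ hD hcd₁
    have e₂ := dep_succ hD hcd₂
    have := prox4 hD p₁ p₂ hdV₁ hdV₂ hne (by rintro rfl; omega) (by rintro rfl; omega)
      (by rintro rfl; omega) (by rintro rfl; omega)
      (by rintro rfl; exact hne (imPred_unique hcd₁ hcd₂))
    have := hD.wt_pos d₁
    have := hD.wt_pos d₂
    omega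

theorem two_prox (hD : D.IsMED) {V t t' : Fin D.n} (h : D.ImPred t V) (h' : D.RemoteProx V t') :
    D.wt t + D.wt V ≤ D.wt t' := by
  obtain ⟨h1, h2, h3⟩ := h'
  have h4 : D.ProperPred t' t := by
    rcases (properPred_iff h).mp h2 with h4 | h4
    · subst h4; exact absurd h h3
    · exact h4
  have h5 := hD.prox_between V t' t h1 h4 (Relation.TransGen.single h)
  refine prox2 hD h5 h1 ?_
  rintro rfl
  have := dep_succ hD h
  omega

theorem sat_child (hD : D.IsMED) {V c t : Fin D.n} (h : D.ImPred V c) (h' : D.RemoteProx c t) :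
    D.prox V t ∧ D.ProperPred t V ∧ D.wt V + D.wt c ≤ D.wt t := by
  obtain ⟨h1, h2, h3⟩ := h'
  have h4 : D.ProperPred t V := by
    rcases (properPred_iff h).mp h2 with h4 | h4
    · subst h4; exact absurd h h3
    · exact h4
  exact ⟨hD.prox_between c t V h1 h4 (Relation.TransGen.single h), h4, two_prox hD h ⟨h1, h2, h3⟩⟩

theorem sum_two (hD : D.IsMED) (hcod : D.cod ≤ 10) {a b : Fin D.n} (h : a ≠ b) :
    D.cost a + D.cost b ≤ 10 := by
  have := sum_cost_le hD hcod {a, b}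
  rwa [Finset.sum_pair h] at this

theorem branch_sat (hD : D.IsMED) (hcod : D.cod ≤ 10) {R : Fin D.n} (hR : D.IsRoot R)
    (huniq : ∀ v, D.IsRoot v → v = R) {V c₁ c₂ : Fin D.n}
    (h₁ : D.ImPred V c₁) (h₂ : D.ImPred V c₂)
    (hne : c₁ ≠ c₂) (s₁ : D.IsSatellite c₁) : False := by
  obtain ⟨t, ht⟩ := s₁
  obtain ⟨hVt, htV, hw⟩ := sat_child hD h₁ ht
  have hVR : ¬ D.IsRoot V := fun h => not_properPred_root h htV
  have hne' : R ≠ V := by rintro rfl; exact hVR hR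
  have hsum := sum_two hD hcod hne'
  have c1 := cost_root hD hR
  have c2 := cost_nonroot hD hVR
  have p₁ := imPred_prox hD h₁
  have p₂ := imPred_prox hD h₂
  have hw2 := prox2 hD p₁ p₂ hne
  have w1 := hD.wt_pos c₁
  have w2 := hD.wt_pos c₂
  have wtR := wt_anti hD (root_pred hD huniq t)
  by_cases f₂ : D.IsSatellite c₂
  · obtain ⟨t', ht'⟩ := f₂
    have htt : t ≠ t' := by
      rintro rfl
      exact hD.succ_sat_diff V c₁ c₂ t h₁ h₂ hne ht ht'
    obtain ⟨hVt', htV', hw'⟩ := sat_child hD h₂ ht'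
    have wtR' := wt_anti hD (root_pred hD huniq t')
    rcases prox_cases hD hVt with h5 | h5 <;> rcases prox_cases hD hVt' with h6 | h6
    · exact htt (imPred_unique h5 h6)
    · have := two_prox hD h5 h6; omega
    · have := two_prox hD h6 h5; omega
    · obtain ⟨u, hu⟩ := exists_parent hVR
      refine htt (hD.prox_unique V u t t' hu hVt hVt' ?_ ?_)
      · rintro rfl; exact h5.2.2 hu
      · rintro rfl; exact h6.2.2 hu
  · rcases free_child hD h₂ f₂ with h3 | ⟨h3, d, hcd, hdV⟩
    · omega
    · have hd₁ := dep_succ hD h₁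
      have hd₂ := dep_succ hD h₂
      have e₁ := dep_succ hD hcd
      have := prox3 hD p₁ p₂ hdV hne (by rintro rfl; omega) (by rintro rfl; omega)
      have := hD.wt_pos d
      omega

theorem branch (hD : D.IsMED) (hcod : D.cod ≤ 10) {R : Fin D.n} (hR : D.IsRoot R)
    (huniq : ∀ v, D.IsRoot v → v = R) {V c₁ c₂ : Fin D.n}
    (h₁ : D.ImPred V c₁) (h₂ : D.ImPred V c₂)
    (hne : c₁ ≠ c₂) : V = R ∧ D.wt R = 4 := by
  have f₁ : D.IsFree c₁ := fun h => branch_sat hD hcod hR huniq h₁ h₂ hne h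
  have f₂ : D.IsFree c₂ := fun h => branch_sat hD hcod hR huniq h₂ h₁ hne.symm h
  have h4 := free_free hD h₁ h₂ hne f₁ f₂
  have wtR := wt_anti hD (root_pred hD huniq V)
  have c1 := cost_root hD hR
  have hV : V = R := by
    by_contra hVR
    have c2 := cost_nonroot hD (fun h => hVR (huniq V h))
    have := sum_two hD hcod hVR
    omega
  subst hV
  refine ⟨rfl, ?_⟩
  have := sum_cost_le hD hcod {V}
  rw [Finset.sum_singleton] at this
  omega

theorem iso_of_equiv {D₂ : PreDiagram} (e : Fin D₂.n ≃ Fin D.n)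
    (hw : ∀ i, D₂.wt i = D.wt (e i)) (hp : ∀ i j, D₂.ImPred i j ↔ D.ImPred (e i) (e j))
    (hx : ∀ i j, D₂.prox i j ↔ D.prox (e i) (e j)) : Isomorphic D D₂ := by
  refine ⟨⟨e.symm, ?_, ?_, ?_⟩⟩
  · intro v
    rw [hw, Equiv.apply_symm_apply]
  · intro a b
    rw [hp, Equiv.apply_symm_apply, Equiv.apply_symm_apply]
  · intro a b
    rw [hx, Equiv.apply_symm_apply, Equiv.apply_symm_apply]

set_option linter.unusedSimpArgs false in
set_option maxHeartbeats 1000000 in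
theorem isoY {V c₁ c₂ d₁ d₂ : Fin D.n} (n₁ : V ≠ c₁) (n₂ : V ≠ c₂) (n₃ : V ≠ d₁) (n₄ : V ≠ d₂)
    (n₅ : c₁ ≠ c₂) (n₆ : c₁ ≠ d₁) (n₇ : c₁ ≠ d₂) (n₈ : c₂ ≠ d₁) (n₉ : c₂ ≠ d₂) (n₀ : d₁ ≠ d₂)
    (all : ∀ v, v = V ∨ v = c₁ ∨ v = c₂ ∨ v = d₁ ∨ v = d₂)
    (hV : D.parent V = none) (h₁ : D.parent c₁ = some V) (h₂ : D.parent c₂ = some V)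
    (h₃ : D.parent d₁ = some c₁) (h₄ : D.parent d₂ = some c₂)
    (w₀ : D.wt V = 4) (w₁ : D.wt c₁ = 1) (w₂ : D.wt c₂ = 1) (w₃ : D.wt d₁ = 1) (w₄ : D.wt d₂ = 1)
    (b₀ : ∀ x, ¬ D.prox V x) (b₁ : ∀ x, D.prox c₁ x ↔ x = V) (b₂ : ∀ x, D.prox c₂ x ↔ x = V)
    (b₃ : ∀ x, D.prox d₁ x ↔ x = c₁ ∨ x = V) (b₄ : ∀ x, D.prox d₂ x ↔ x = c₂ ∨ x = V) :
    Isomorphic D diagY11 := by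
  have hinj : Function.Injective (![V, c₁, c₂, d₁, d₂] : Fin 5 → Fin D.n) := by
    intro i j hij
    fin_cases i <;> fin_cases j <;>
      simp [n₁, n₂, n₃, n₄, n₅, n₆, n₇, n₈, n₉, n₀, n₁.symm, n₂.symm, n₃.symm, n₄.symm, n₅.symm,
        n₆.symm, n₇.symm, n₈.symm, n₉.symm, n₀.symm] at hij ⊢
  have hsurj : Function.Surjective (![V, c₁, c₂, d₁, d₂] : Fin 5 → Fin D.n) := by
    intro v
    rcases all v with h | h | h | h | h
    · exact ⟨0, h.symm⟩
    · exact ⟨1, h.symm⟩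
    · exact ⟨2, h.symm⟩
    · exact ⟨3, h.symm⟩
    · exact ⟨4, h.symm⟩
  refine iso_of_equiv (D₂ := diagY11)
    (Equiv.ofBijective (![V, c₁, c₂, d₁, d₂] : Fin 5 → Fin D.n) ⟨hinj, hsurj⟩) ?_ ?_ ?_
  · intro i
    change Fin 5 at i
    change _ = D.wt (![V, c₁, c₂, d₁, d₂] i)
    fin_cases i <;> simp [diagY11, w₀, w₁, w₂, w₃, w₄]
  · intro i j
    change Fin 5 at i j
    change _ ↔ D.parent (![V, c₁, c₂, d₁, d₂] j) = some (![V, c₁, c₂, d₁, d₂] i)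
    fin_cases i <;> fin_cases j <;>
      simp [diagY11, ImPred, hV, h₁, h₂, h₃, h₄, n₁, n₂, n₃, n₄, n₅, n₆, n₇, n₈, n₉, n₀, n₁.symm,
        n₂.symm, n₃.symm, n₄.symm, n₅.symm, n₆.symm, n₇.symm, n₈.symm, n₉.symm, n₀.symm]
  · intro i j
    change Fin 5 at i j
    change _ ↔ D.prox (![V, c₁, c₂, d₁, d₂] i) (![V, c₁, c₂, d₁, d₂] j)
    fin_cases i <;> fin_cases j <;>
      simp [diagY11, b₀, b₁, b₂, b₃, b₄, n₁, n₂, n₃, n₄, n₅, n₆, n₇, n₈, n₉, n₀, n₁.symm,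
        n₂.symm, n₃.symm, n₄.symm, n₅.symm, n₆.symm, n₇.symm, n₈.symm, n₉.symm, n₀.symm]

theorem branchY (hD : D.IsMED) (hcod : D.cod ≤ 10) {R : Fin D.n} (hR : D.IsRoot R)
    (huniq : ∀ v, D.IsRoot v → v = R) {V c₁ c₂ : Fin D.n}
    (h₁ : D.ImPred V c₁) (h₂ : D.ImPred V c₂)
    (hne : c₁ ≠ c₂) : Isomorphic D diagY11 := by
  obtain ⟨rfl, hw4⟩ := branch hD hcod hR huniq h₁ h₂ hne
  have f₁ := root_child_free hR h₁
  have f₂ := root_child_free hR h₂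
  have p₁ := imPred_prox hD h₁
  have p₂ := imPred_prox hD h₂
  have hd₁ := dep_succ hD h₁
  have hd₂ := dep_succ hD h₂
  have hV0 := dep_root hR
  have n₁ : V ≠ c₁ := by rintro rfl; omega
  have n₂ : V ≠ c₂ := by rintro rfl; omega
  have cR := cost_root hD hR
  have satd : ∀ c d, D.ImPred V c → D.ImPred c d → D.prox d V → D.IsSatellite d := by
    intro c d hVc hcd hdV
    have e₁ := dep_succ hD hVc
    have e₂ := dep_succ hD hcd
    rcases prox_cases hD hdV with h | h
    · have e₃ := dep_succ hD h; omega
    · exact ⟨V, h⟩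
  have r₁ : ¬ D.IsRoot c₁ := fun h => n₁ (huniq _ h).symm
  have r₂ : ¬ D.IsRoot c₂ := fun h => n₂ (huniq _ h).symm
  have k₁ := cost_nonroot hD r₁
  have k₂ := cost_nonroot hD r₂
  have sum3 : ∀ a b, V ≠ a → V ≠ b → a ≠ b → D.cost V + D.cost a + D.cost b ≤ 10 := by
    intro a b h1 h2 h3
    have := sum_cost_le hD hcod {V, a, b}
    rw [Finset.sum_insert (by simp [h1, h2]), Finset.sum_pair h3] at this
    omega
  have s12 := sum3 c₁ c₂ n₁ n₂ hne
  rcases free_child hD h₁ f₁ with h3 | ⟨h3, d₁, hcd₁, hdV₁⟩ <;>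
  rcases free_child hD h₂ f₂ with h4 | ⟨h4, d₂, hcd₂, hdV₂⟩
  · omega
  · have e₂ := dep_succ hD hcd₂
    have := cost_sat hD (satd _ _ h₂ hcd₂ hdV₂)
    have := sum3 c₁ d₂ n₁ (by rintro rfl; omega) (by rintro rfl; omega)
    omega
  · have e₂ := dep_succ hD hcd₁
    have := cost_sat hD (satd _ _ h₁ hcd₁ hdV₁)
    have := sum3 c₂ d₁ n₂ (by rintro rfl; omega) (by rintro rfl; omega)
    omega
  have e₁ := dep_succ hD hcd₁
  have e₂ := dep_succ hD hcd₂
  have s₁ := satd _ _ h₁ hcd₁ hdV₁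
  have s₂ := satd _ _ h₂ hcd₂ hdV₂
  have q₁ := cost_sat hD s₁
  have q₂ := cost_sat hD s₂
  have a1 : c₁ ≠ d₁ := by rintro rfl; omega
  have a2 : c₁ ≠ d₂ := by rintro rfl; omega
  have a3 : c₂ ≠ d₁ := by rintro rfl; omega
  have a4 : c₂ ≠ d₂ := by rintro rfl; omega
  have a5 : V ≠ d₁ := by rintro rfl; omega
  have a6 : V ≠ d₂ := by rintro rfl; omega
  have a7 : d₁ ≠ d₂ := by rintro rfl; exact hne (imPred_unique hcd₁ hcd₂)
  have w₁ : D.wt d₁ = 1 := by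
    have := prox1 hD (imPred_prox hD hcd₁)
    have := hD.wt_pos d₁
    omega
  have w₂ : D.wt d₂ = 1 := by
    have := prox1 hD (imPred_prox hD hcd₂)
    have := hD.wt_pos d₂
    omega
  -- every leaf is one of the two satellites
  have leaf : ∀ l, D.IsLeaf l → l = d₁ ∨ l = d₂ := by
    intro l hl
    by_contra hcon
    push Not at hcon
    obtain ⟨l1, l2⟩ := hcon
    have lV : l ≠ V := by rintro rfl; exact hl _ h₁
    have lR : ¬ D.IsRoot l := fun h => lV (huniq _ h)
    have hl1 : 1 ≤ D.cost l := by
      have := cost_nonroot hD lR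
      have := hD.wt_pos l
      by_cases hw : D.wt l = 1
      · exact (cost_sat hD (hD.minimal l hl hw)).1
      · omega
    have := sum_cost_le hD hcod {V, d₁, d₂, l}
    rw [Finset.sum_insert (by simp [a5, a6, lV.symm]),
      Finset.sum_insert (by simp [a7, l1.symm]), Finset.sum_pair l2.symm] at this
    linarith [cR.2.2.1 hw4.ge, q₁.1, q₂.1]
  have all : ∀ v, v = V ∨ v = c₁ ∨ v = c₂ ∨ v = d₁ ∨ v = d₂ := by
    have aux : ∀ v c d, D.ImPred V c → D.ImPred c d → D.Pred v d → v = V ∨ v = c ∨ v = d := by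
      intro v c d g1 g2 g3
      by_cases g4 : v = d
      · exact Or.inr (Or.inr g4)
      rcases (properPred_iff g2).mp (properPred_of_pred_ne g3 g4) with g5 | g5
      · exact Or.inr (Or.inl g5)
      rcases (properPred_iff g1).mp g5 with g6 | g6
      · exact Or.inl g6
      · exact absurd g6 (not_properPred_root hR)
    intro v
    obtain ⟨l, hvl, hl⟩ := exists_leaf hD v
    rcases leaf l hl with rfl | rfl
    · rcases aux v _ _ h₁ hcd₁ hvl with h | h | h <;> simp [h]
    · rcases aux v _ _ h₂ hcd₂ hvl with h | h | h <;> simp [h]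
  -- proximity
  have pc : ∀ c, D.ImPred V c → ∀ x, D.prox c x ↔ x = V := by
    intro c hc x
    constructor
    · intro hx
      rcases prox_cases hD hx with h | h
      · exact imPred_unique h hc
      · exact absurd ⟨x, h⟩ (root_child_free hR hc)
    · rintro rfl; exact imPred_prox hD hc
  have pd : ∀ c d, D.ImPred V c → D.ImPred c d → D.prox d V → ∀ x, D.prox d x ↔ x = c ∨ x = V := by
    intro c d hc hcd hdV x
    have hVc : V ≠ c := by
      rintro rfl
      have := dep_succ hD hc
      omega
    constructor
    · intro hx
      by_cases hxc : x = c
      · exact Or.inl hxc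
      · exact Or.inr (hD.prox_unique d c x V hcd hx hdV hxc hVc)
    · rintro (rfl | rfl)
      · exact imPred_prox hD hcd
      · exact hdV
  have b1 := pc _ h₁
  have b2 := pc _ h₂
  have b3 := pd _ _ h₁ hcd₁ hdV₁
  have b4 := pd _ _ h₂ hcd₂ hdV₂
  have b0 := hD.root_not_prox V hR
  exact isoY n₁ n₂ a5 a6 hne a1 a2 a3 a4 a7 all hR h₁ h₂ hcd₁ hcd₂ hw4 h3 h4 w₁ w₂ b0 b1 b2 b3 b4

end Branching

end PreDiagram

namespace PreDiagram

/-- The data of a diagram whose forest is a chain, indexed by natural numbers. -/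
structure ChainData (n : ℕ) (w : ℕ → ℕ) (p : ℕ → ℕ → Prop) (c : ℕ → ℤ) : Prop where
  n_pos : 0 < n
  w_pos : ∀ i, i < n → 1 ≤ w i
  p_lt : ∀ i j, p i j → j < i ∧ i < n
  p_succ : ∀ i, i + 1 < n → p (i + 1) i
  p_unique : ∀ i j k, p i j → p i k → j + 2 ≤ i → k + 2 ≤ i → j = k
  p_between : ∀ a b d, p a b → b < d → d < a → p d b
  pr1 : ∀ x a, p a x → w a ≤ w x
  pr2 : ∀ x a b, p a x → p b x → a < b → w a + w b ≤ w x
  pr3 : ∀ x a b d, p a x → p b x → p d x → a < b → b < d → w a + w b + w d ≤ w x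
  pr4 : ∀ x a b d e, p a x → p b x → p d x → p e x → a < b → b < d → d < e →
    w a + w b + w d + w e ≤ w x
  last : w (n - 1) = 1 → ∃ t, t + 2 ≤ n - 1 ∧ p (n - 1) t
  c_zero : 2 ≤ w 0 ∧ 1 ≤ c 0 ∧ (3 ≤ w 0 → 4 ≤ c 0) ∧ (4 ≤ w 0 → 8 ≤ c 0) ∧
    (5 ≤ w 0 → 13 ≤ c 0)
  c_pos : ∀ i, 0 < i → i < n → 0 ≤ c i ∧ (2 ≤ w i → 2 ≤ c i) ∧ (3 ≤ w i → 5 ≤ c i) ∧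
    (4 ≤ w i → 9 ≤ c i)
  c_sat : ∀ i j, p i j → j + 2 ≤ i → 1 ≤ c i ∧ (2 ≤ w i → 3 ≤ c i)
  c_sum : ∀ S : Finset ℕ, (∀ i ∈ S, i < n) → ∑ i ∈ S, c i ≤ 10

/-- The chain data agree with the diagram `E`. -/
def Match (n : ℕ) (w : ℕ → ℕ) (p : ℕ → ℕ → Prop) (E : PreDiagram) : Prop :=
  E.n = n ∧ E.parent = chainParent E.n ∧ (∀ i (hi : i < E.n), E.wt ⟨i, hi⟩ = w i) ∧
    ∀ i j (hi : i < E.n) (hj : j < E.n), E.prox ⟨i, hi⟩ ⟨j, hj⟩ ↔ p i j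

section ChainConstruction

variable {D : PreDiagram}

theorem dep_inj (hD : D.IsMED) {R : Fin D.n} (huniq : ∀ v, D.IsRoot v → v = R)
    (hu : ∀ V a b, D.ImPred V a → D.ImPred V b → a = b) : Function.Injective D.dep := by
  have key : ∀ k a b, D.dep a = k → D.dep b = k → a = b := by
    intro k
    induction k with
    | zero =>
      have hr : ∀ a, D.dep a = 0 → a = R := by
        intro a ha
        apply huniq
        by_contra h
        obtain ⟨u, hu⟩ := exists_parent h
        have := dep_succ hD hu
        omega
      intro a b ha hb
      rw [hr a ha, hr b hb]
    | succ k ih =>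
      have hr : ∀ a, D.dep a = k + 1 → ∃ u, D.ImPred u a ∧ D.dep u = k := by
        intro a ha
        by_cases h : D.IsRoot a
        · have := dep_root h; omega
        · obtain ⟨u, hu⟩ := exists_parent h
          have := dep_succ hD hu
          exact ⟨u, hu, by omega⟩
      intro a b ha hb
      obtain ⟨u, h1, h2⟩ := hr a ha
      obtain ⟨v, h3, h4⟩ := hr b hb
      have := ih u v h2 h4
      subst this
      exact hu u a b h1 h3
  intro a b hab
  exact key _ a b rfl hab.symm

theorem dep_properPred (hD : D.IsMED) {a b : Fin D.n} (h : D.ProperPred a b) :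
    D.dep a < D.dep b := by
  induction h with
  | single h => have := dep_succ hD h; omega
  | tail _ h ih => have := dep_succ hD h; omega

theorem exists_chain (hD : D.IsMED) (hcod : D.cod ≤ 10) {R : Fin D.n} (hR : D.IsRoot R)
    (huniq : ∀ v, D.IsRoot v → v = R)
    (hu : ∀ V a b, D.ImPred V a → D.ImPred V b → a = b) :
    ∃ w p c, ChainData D.n w p c ∧ ∀ E, Match D.n w p E → Isomorphic D E := by
  have hinj := dep_inj hD huniq hu
  have hbij : Function.Bijective (fun v : Fin D.n => (⟨D.dep v, dep_lt hD v⟩ : Fin D.n)) := by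
    apply Finite.injective_iff_bijective.mp
    intro a b hab
    exact hinj (by simpa using hab)
  obtain ⟨e, he⟩ : ∃ e : Fin D.n ≃ Fin D.n, ∀ i, D.dep (e i) = i.val := by
    refine ⟨(Equiv.ofBijective _ hbij).symm, ?_⟩
    intro i
    have := (Equiv.ofBijective _ hbij).apply_symm_apply i
    exact congrArg Fin.val this
  have hlt0 : 0 < D.n := lt_of_le_of_lt (Nat.zero_le _) R.isLt
  have heR : e ⟨0, hlt0⟩ = R := hinj (by rw [he, dep_root hR])
  have him : ∀ i j, D.ImPred (e i) (e j) ↔ j.val = i.val + 1 := by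
    intro i j
    constructor
    · intro h
      have := dep_succ hD h
      rwa [he, he] at this
    · intro h
      by_cases hr : D.IsRoot (e j)
      · have := dep_root hr
        rw [he] at this
        omega
      · obtain ⟨u, hu⟩ := exists_parent hr
        have h1 := dep_succ hD hu
        rw [he] at h1
        have : u = e i := hinj (by rw [he]; omega)
        rwa [this] at hu
  have hpp : ∀ i j, D.ProperPred (e i) (e j) ↔ i.val < j.val := by
    intro i j
    constructor
    · intro h
      have := dep_properPred hD h
      rwa [he, he] at this
    · have key : ∀ k (j : Fin D.n), j.val = k → i.val < j.val → D.ProperPred (e i) (e j) := by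
        intro k
        induction k with
        | zero => intro j h1 h2; omega
        | succ k ih =>
          intro j h1 h2
          have hk : k < D.n := by have := j.isLt; omega
          have h3 : D.ImPred (e ⟨k, hk⟩) (e j) := (him _ _).mpr h1
          rw [properPred_iff h3]
          by_cases h4 : i.val = k
          · left; congr 1; exact Fin.ext h4
          · right; exact ih ⟨k, hk⟩ rfl (by simp only; omega)
      exact key _ j rfl
  have hrem : ∀ i j, D.RemotePred (e j) (e i) ↔ j.val + 2 ≤ i.val := by
    intro i j
    unfold RemotePred
    rw [hpp, him]
    omega
  have hroot : ∀ i : Fin D.n, 0 < i.val → ¬ D.IsRoot (e i) := by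
    intro i hi h
    have := dep_root h
    rw [he] at this
    omega
  refine ⟨fun i => if h : i < D.n then D.wt (e ⟨i, h⟩) else 0,
    fun i j => ∃ (hi : i < D.n) (hj : j < D.n), D.prox (e ⟨i, hi⟩) (e ⟨j, hj⟩),
    fun i => if h : i < D.n then D.cost (e ⟨i, h⟩) else 0, ?_, ?_⟩
  · have hne : ∀ {a b : ℕ} (ha : a < D.n) (hb : b < D.n), a < b → e ⟨a, ha⟩ ≠ e ⟨b, hb⟩ := by
      intro a b ha hb hab h
      have := congrArg Fin.val (e.injective h)
      simp only at this
      omega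
    constructor
    · exact hlt0
    · intro i hi
      simp only [hi, dif_pos]
      exact hD.wt_pos _
    · rintro i j ⟨hi, hj, h⟩
      refine ⟨?_, hi⟩
      rcases prox_cases hD h with h1 | h1
      · have := (him _ _).mp h1
        simp only at this
        omega
      · exact (hpp _ _).mp h1.2.1
    · intro i hi
      exact ⟨hi, by omega, imPred_prox hD ((him _ _).mpr rfl)⟩
    · rintro i j k ⟨hi, hj, h1⟩ ⟨_, hk, h2⟩ h3 h4
      have hpar : D.ImPred (e ⟨i - 1, by omega⟩) (e ⟨i, hi⟩) :=
        (him _ _).mpr (by simp only; omega)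
      have := hD.prox_unique _ _ _ _ hpar h1 h2 (hne _ _ (by omega)) (hne _ _ (by omega))
      exact congrArg Fin.val (e.injective this)
    · rintro a b d ⟨ha, hb, h⟩ h1 h2
      exact ⟨by omega, hb, hD.prox_between _ _ _ h ((hpp _ ⟨d, by omega⟩).mpr h1)
        ((hpp _ _).mpr h2)⟩
    · rintro x a ⟨ha, hx, h1⟩
      simp only [ha, hx, dif_pos]
      exact prox1 hD h1
    · rintro x a b ⟨ha, hx, h1⟩ ⟨hb, _, h2⟩ hab
      simp only [ha, hb, hx, dif_pos]
      exact prox2 hD h1 h2 (hne _ _ hab)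
    · rintro x a b d ⟨ha, hx, h1⟩ ⟨hb, _, h2⟩ ⟨hd, _, h3⟩ hab hbd
      simp only [ha, hb, hx, hd, dif_pos]
      exact prox3 hD h1 h2 h3 (hne _ _ hab) (hne _ _ (by omega)) (hne _ _ hbd)
    · rintro x a b d f ⟨ha, hx, h1⟩ ⟨hb, _, h2⟩ ⟨hd, _, h3⟩ ⟨hf, _, h4⟩ hab hbd hdf
      simp only [ha, hb, hx, hd, hf, dif_pos]
      exact prox4 hD h1 h2 h3 h4 (hne _ _ hab) (hne _ _ (by omega)) (hne _ _ (by omega))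
        (hne _ _ hbd) (hne _ _ (by omega)) (hne _ _ hdf)
    · have hl : D.n - 1 < D.n := by omega
      simp only [hl, dif_pos]
      intro hw
      have hleaf : D.IsLeaf (e ⟨D.n - 1, hl⟩) := by
        intro v hv
        obtain ⟨i, rfl⟩ := e.surjective v
        have := (him _ _).mp hv
        have := i.isLt
        simp only at *
        omega
      obtain ⟨t, ht1, ht2⟩ := hD.minimal _ hleaf hw
      obtain ⟨i, rfl⟩ := e.surjective t
      exact ⟨i.val, (hrem _ _).mp ht2, trivial, i.isLt, ht1⟩
    · simp only [hlt0, dif_pos, heR]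
      exact ⟨root_wt hD hR, cost_root hD hR⟩
    · intro i h0 hi
      simp only [hi, dif_pos]
      exact cost_nonroot hD (hroot _ h0)
    · rintro i j ⟨hi, hj, h⟩ hij
      simp only [hi, dif_pos]
      exact cost_sat hD ⟨_, h, (hrem _ _).mpr hij⟩
    · intro S hS
      have h1 := sum_cost_le hD hcod (S.attach.image (fun i => e ⟨i.1, hS i.1 i.2⟩))
      rw [Finset.sum_image] at h1
      · rw [← Finset.sum_attach]
        refine le_trans (le_of_eq ?_) h1
        apply Finset.sum_congr rfl
        intro i _
        simp only [hS i.1 i.2, dif_pos]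
      · intro i _ j _ hij
        have := congrArg Fin.val (e.injective hij)
        exact Subtype.ext this
  · rintro E ⟨hn, hpar, hw, hp⟩
    refine iso_of_equiv ((finCongr hn).trans e) ?_ ?_ ?_
    · intro i
      have hi : i.val < D.n := by have := i.isLt; omega
      have := hw i.val i.isLt
      simp only [hi, dif_pos] at this
      exact this
    · intro i j
      change _ ↔ D.ImPred (e (finCongr hn i)) (e (finCongr hn j))
      rw [him]
      unfold ImPred
      rw [hpar]
      unfold chainParent
      simp only [finCongr_apply, Fin.val_cast]
      split_ifs with h
      · simp; omega
      · rw [Option.some_inj, Fin.ext_iff]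
        simp only
        omega
    · intro i j
      have hi : i.val < D.n := by have := i.isLt; omega
      have hj : j.val < D.n := by have := j.isLt; omega
      have := hp i.val j.val i.isLt j.isLt
      simp only [hi, hj, exists_true_left] at this
      exact this

end ChainConstruction

end PreDiagram

namespace PreDiagram

section Classification

variable {n : ℕ} {w : ℕ → ℕ} {p : ℕ → ℕ → Prop} {c : ℕ → ℤ}

theorem ChainData.mono (h : ChainData n w p c) (i : ℕ) (hi : i + 1 < n) : w (i + 1) ≤ w i :=
  h.pr1 i (i + 1) (h.p_succ i hi)

theorem ChainData.anti (h : ChainData n w p c) (i k : ℕ) (hi : i + k < n) : w (i + k) ≤ w i := by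
  induction k with
  | zero => exact le_rfl
  | succ k ih => exact (h.mono (i + k) hi).trans (ih (by omega))

theorem ChainData.anti' (h : ChainData n w p c) {i j : ℕ} (hij : i ≤ j) (hj : j < n) :
    w j ≤ w i := by
  obtain ⟨k, rfl⟩ := Nat.exists_eq_add_of_le hij
  exact h.anti i k hj

theorem ChainData.root_bound (h : ChainData n w p c) :
    2 ≤ w 0 ∧ w 0 ≤ 4 ∧ 3 * (w 0 : ℤ) - 5 ≤ c 0 ∧ 4 * (w 0 : ℤ) - 8 ≤ c 0 := by
  have h1 := h.c_zero
  have h2 := h.c_sum {0} (by simpa using h.n_pos)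
  rw [Finset.sum_singleton] at h2
  omega

theorem ChainData.bound (h : ChainData n w p c) (i : ℕ) (h0 : 0 < i) (hi : i < n) :
    2 * (w i : ℤ) - 2 ≤ c i ∧ 3 * (w i : ℤ) - 4 ≤ c i ∧ 1 ≤ w i := by
  have h1 := h.root_bound.2.1
  have h2 := h.anti' (Nat.zero_le i) hi
  have h3 := h.c_pos i h0 hi
  have h4 := h.w_pos i hi
  omega

theorem ChainData.sat_bound (h : ChainData n w p c) (i j : ℕ) (hp : p i j) (hij : j + 2 ≤ i) :
    2 * (w i : ℤ) - 1 ≤ c i := by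
  have hi := (h.p_lt i j hp).2
  have h1 := h.root_bound.2.1
  have h2 := h.anti' (Nat.zero_le i) hi
  have h3 := h.c_pos i (by omega) hi
  have h4 := h.w_pos i hi
  have h5 := h.c_sat i j hp hij
  omega

/-- A remote proximity forces a proximity inequality at the top. -/
theorem ChainData.remote (h : ChainData n w p c) (i j : ℕ) (hp : p i j) (hij : j + 2 ≤ i) :
    p (j + 2) j ∧ w (j + 1) + w (j + 2) ≤ w j := by
  have hi := (h.p_lt i j hp).2
  have h2 : p (j + 2) j := by
    by_cases h3 : j + 2 = i
    · rw [h3]; exact hp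
    · exact h.p_between i j (j + 2) hp (by omega) (by omega)
  exact ⟨h2, h.pr2 j _ _ (h.p_succ j (by omega)) h2 (by omega)⟩

theorem ChainData.match_of (h : ChainData n w p c) (E : PreDiagram) (hn : E.n = n)
    (hpar : E.parent = chainParent E.n) (hw : ∀ i (hi : i < E.n), E.wt ⟨i, hi⟩ = w i)
    (X : ℕ → ℕ → Prop) (hX : ∀ i j, j + 2 ≤ i → i < n → (p i j ↔ X i j))
    (hp : ∀ i j (hi : i < E.n) (hj : j < E.n),
      E.prox ⟨i, hi⟩ ⟨j, hj⟩ ↔ (i = j + 1 ∨ (j + 2 ≤ i ∧ X i j))) : Match n w p E := by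
  refine ⟨hn, hpar, hw, ?_⟩
  intro i j hi hj
  rw [hp]
  constructor
  · rintro (h1 | ⟨h1, h2⟩)
    · subst h1; exact h.p_succ j (by omega)
    · exact (hX i j h1 (by omega)).mpr h2
  · intro h1
    have h2 := h.p_lt i j h1
    by_cases h3 : i = j + 1
    · exact Or.inl h3
    · exact Or.inr ⟨by omega, (hX i j (by omega) (by omega)).mp h1⟩

theorem ChainData.sum_lower (h : ChainData n w p c) (k : ℕ) (hk : k < n) (hw : 2 ≤ w k) :
    1 + 2 * (k : ℤ) ≤ ∑ i ∈ Finset.range (k + 1), c i := by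
  induction k with
  | zero =>
    have := h.c_zero
    simp
    omega
  | succ k ih =>
    have h1 := h.mono k hk
    have h2 := ih (by omega) (by omega)
    have h3 := h.c_pos (k + 1) (by omega) hk
    rw [Finset.sum_range_succ]
    have h4 := h3.2.1 hw
    push_cast
    linarith

theorem ChainData.le_four (h : ChainData n w p c) (k : ℕ) (hk : k < n) (hw : 2 ≤ w k) : k ≤ 4 := by
  have h1 := h.sum_lower k hk hw
  have h2 := h.c_sum (Finset.range (k + 1)) (by intro i hi; simp at hi; omega)
  omega

/-- If the last weight is one, then the last vertices form a tail of satellites. -/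
theorem ChainData.tail (h : ChainData n w p c) (hl : w (n - 1) = 1) :
    ∃ t, t ≤ 4 ∧ 2 ≤ w t ∧ (n = t + 3 ∨ n = t + 4) ∧ ∀ i, t < i → i < n → p i t := by
  have hn := h.n_pos
  obtain ⟨t, ht, hp⟩ := h.last hl
  have hall : ∀ i, t < i → i < n → p i t := by
    intro i h1 h2
    by_cases h3 : i = n - 1
    · rw [h3]; exact hp
    · exact h.p_between _ _ _ hp h1 (by omega)
  have h1 := (h.remote _ _ hp ht).2
  have h2 := h.w_pos (t + 1) (by omega)
  have h3 := h.w_pos (t + 2) (by omega)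
  refine ⟨t, h.le_four t (by omega) (by omega), by omega, ?_, hall⟩
  by_contra hcon
  have h5 := h.pr4 t _ _ _ _ (hall (t + 1) (by omega) (by omega))
    (hall (t + 2) (by omega) (by omega)) (hall (t + 3) (by omega) (by omega))
    (hall (t + 4) (by omega) (by omega)) (by omega) (by omega) (by omega)
  have h6 := h.w_pos (t + 3) (by omega)
  have h7 := h.w_pos (t + 4) (by omega)
  have h8 := h.root_bound
  have h9 := h.anti' (Nat.zero_le t) (by omega)
  by_cases ht0 : t = 0
  · subst ht0
    have a1 := h.c_sat 2 0 (hall 2 (by omega) (by omega)) (by omega)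
    have a2 := h.c_sat 3 0 (hall 3 (by omega) (by omega)) (by omega)
    have a3 := h.c_sat 4 0 (hall 4 (by omega) (by omega)) (by omega)
    have a4 := h.bound 1 (by omega) (by omega)
    have := h.c_sum (Finset.range 5) (by intro i hi; simp at hi; omega)
    simp only [Finset.sum_range_succ, Finset.sum_range_zero] at this
    omega
  · have a4 := h.bound t (by omega) (by omega)
    have := h.c_sum {0, t} (by intro i hi; simp at hi; omega)
    rw [Finset.sum_pair (by omega)] at this
    omega

theorem ChainData.tail_prox (h : ChainData n w p c) (t : ℕ) (hall : ∀ i, t < i → i < n → p i t)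
    (hw : ∀ j, j < t → w j < w (j + 1) + w (j + 2)) :
    ∀ i j, j + 2 ≤ i → i < n → (p i j ↔ j = t) := by
  intro i j hij hi
  constructor
  · intro hp
    by_cases h1 : t + 2 ≤ i
    · exact h.p_unique i j t hp (hall i (by omega) hi) hij h1
    · have h2 := (h.remote i j hp hij).2
      have h3 := hw j (by omega)
      omega
  · rintro rfl
    exact hall i (by omega) hi

theorem ChainData.notail_prox (h : ChainData n w p c)
    (hw : ∀ j, j + 2 < n → w j < w (j + 1) + w (j + 2)) :
    ∀ i j, j + 2 ≤ i → i < n → (p i j ↔ False) := by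
  intro i j hij hi
  refine iff_false_intro fun hp => ?_
  have h2 := (h.remote i j hp hij).2
  have h3 := hw j (by omega)
  omega

/-- The list of possible answers, for a predicate on diagrams. -/
def Answer (Q : PreDiagram → Prop) : Prop :=
    (∃ k, 1 ≤ k ∧ k ≤ 10 ∧ Q (diagA k)) ∨
    (∃ k, 4 ≤ k ∧ k ≤ 10 ∧ Q (diagD k)) ∨
    Q (diagJ 2 0) ∨ Q (diagJ 2 1) ∨
    Q (diagE 6) ∨ Q (diagE 7) ∨ Q (diagE 8) ∨
    Q diagX10 ∨ Q diagX11 ∨ Q diagX12 ∨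
    Q diagZ11 ∨ Q diagY11

theorem ansA {Q : PreDiagram → Prop} (k : ℕ) (h1 : 1 ≤ k) (h2 : k ≤ 10) (h : Q (diagA k)) :
    Answer Q := Or.inl ⟨k, h1, h2, h⟩

theorem ansD {Q : PreDiagram → Prop} (k : ℕ) (h1 : 4 ≤ k) (h2 : k ≤ 10) (h : Q (diagD k)) :
    Answer Q := Or.inr (Or.inl ⟨k, h1, h2, h⟩)

theorem matchA_even (h : ChainData n w p c) (t : ℕ) (hn : n = t + 3)
    (hall : ∀ i, t < i → i < n → p i t) (hw : ∀ i, i ≤ t → w i = 2)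
    (hw1 : w (t + 1) = 1) (hw2 : w (t + 2) = 1) : Match n w p (diagA (2 * t + 2)) := by
  have hk : (diagA (2 * t + 2)).n = t + 3 := by
    simp only [diagA]; rw [if_pos (by omega)]; omega
  refine h.match_of _ (by omega) rfl ?_ (fun _ j => j = t)
    (h.tail_prox t hall (fun j hj => ?_)) ?_
  · intro i hi
    simp only [diagA]
    split_ifs with h1
    · exact (hw i (by omega)).symm
    · have : i = t + 1 ∨ i = t + 2 := by omega
      rcases this with rfl | rfl
      · exact hw1.symm
      · exact hw2.symm
  · have := hw j (by omega)
    have := hw (j + 1) (by omega)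
    have := h.w_pos (j + 2) (by omega)
    omega
  · intro i j hi hj
    simp only [diagA]
    omega

theorem matchA_odd (h : ChainData n w p c) (hw : ∀ i, i < n → w i = 2) :
    Match n w p (diagA (2 * n - 1)) := by
  have hn := h.n_pos
  have hk : (diagA (2 * n - 1)).n = n := by
    simp only [diagA]; rw [if_neg (by omega)]; omega
  refine h.match_of _ (by omega) rfl ?_ (fun _ _ => False)
    (h.notail_prox (fun j hj => ?_)) ?_
  · intro i hi
    simp only [diagA]
    rw [if_pos (by omega), hw i (by omega)]
  · have := hw j (by omega)
    have := hw (j + 1) (by omega)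
    have := hw (j + 2) (by omega)
    omega
  · intro i j hi hj
    simp only [diagA, and_false, false_and, true_and, and_true, or_false, false_or, iff_false, false_iff, not_and]
    omega

theorem matchD_even (h : ChainData n w p c) (hw0 : w 0 = 3) (hw : ∀ i, 0 < i → i < n → w i = 2) :
    Match n w p (diagD (2 * n + 2)) := by
  have hn := h.n_pos
  have hk : (diagD (2 * n + 2)).n = n := by
    simp only [diagD]; rw [if_pos (by omega)]; omega
  refine h.match_of _ (by omega) rfl ?_ (fun _ _ => False)
    (h.notail_prox (fun j hj => ?_)) ?_
  · intro i hi
    simp only [diagD]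
    split_ifs with h1 h2
    · rw [h1, hw0]
    · exact (hw i (by omega) (by omega)).symm
    · omega
  · have : w j ≤ 3 := hw0 ▸ h.anti' (Nat.zero_le j) (by omega)
    have := hw (j + 1) (by omega) (by omega)
    have := hw (j + 2) (by omega) (by omega)
    omega
  · intro i j hi hj
    simp only [diagD, and_false, false_and, true_and, and_true, or_false, false_or, iff_false, false_iff, not_and]
    omega

theorem matchD_odd (h : ChainData n w p c) (t : ℕ) (hn : n = t + 3)
    (hall : ∀ i, t < i → i < n → p i t) (hw0 : w 0 = 3) (hw : ∀ i, 0 < i → i ≤ t → w i = 2)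
    (hw1 : w (t + 1) = 1) (hw2 : w (t + 2) = 1)
    (hX : ∀ i j, j + 2 ≤ i → i < n → (p i j ↔ j = t)) : Match n w p (diagD (2 * t + 5)) := by
  have hk : (diagD (2 * t + 5)).n = t + 3 := by
    simp only [diagD]; rw [if_neg (by omega)]; omega
  refine h.match_of _ (by omega) rfl ?_ (fun _ j => j = t) hX ?_
  · intro i hi
    simp only [diagD]
    split_ifs with h1 h2
    · rw [h1, hw0]
    · exact (hw i (by omega) (by omega)).symm
    · have : i = t + 1 ∨ i = t + 2 := by omega
      rcases this with rfl | rfl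
      · exact hw1.symm
      · exact hw2.symm
  · intro i j hi hj
    simp only [diagD]
    omega

theorem classify_notail (h : ChainData n w p c) (hl : 2 ≤ w (n - 1)) (Q : PreDiagram → Prop)
    (hQ : ∀ E, Match n w p E → Q E) : Answer Q := by
  have hn := h.n_pos
  have hn5 := h.le_four (n - 1) (by omega) hl
  have hr := h.root_bound
  have hge : ∀ i, i < n → 2 ≤ w i := fun i hi => hl.trans (h.anti' (by omega) (by omega))
  have hle : ∀ i, i < n → w i ≤ w 0 := fun i hi => h.anti' (by omega) (by omega)
  have two : ∀ i, 0 < i → i < n → c 0 + c i ≤ 10 := by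
    intro i h0 hi
    have := h.c_sum {0, i} (by intro j hj; simp at hj; omega)
    rwa [Finset.sum_pair (by omega)] at this
  have three : ∀ i j, 0 < i → i < j → j < n → c 0 + (c i + c j) ≤ 10 := by
    intro i j h0 hi hj
    have := h.c_sum {0, i, j} (by intro j hj; simp at hj; omega)
    rwa [Finset.sum_insert (by simp <;> omega), Finset.sum_pair (by omega)] at this
  have h3 : w 0 = 2 ∨ w 0 = 3 ∨ w 0 = 4 := by omega
  rcases h3 with h3 | h3 | h3
  · refine ansA (2 * n - 1) (by omega) (by omega) (hQ _ (matchA_odd h ?_))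
    intro i hi
    have := hge i hi
    have := hle i hi
    omega
  · by_cases hw1 : 2 ≤ n ∧ w 1 = 3
    · obtain ⟨h2n, hw1⟩ := hw1
      have hn2 : n = 2 := by
        by_contra hne
        have a1 := h.bound 1 (by omega) (by omega)
        have a2 := h.bound 2 (by omega) (by omega)
        have a3 := three 1 2 (by omega) (by omega) (by omega)
        have a4 := hge 2 (by omega)
        omega
      refine Or.inr (Or.inr (Or.inl (hQ _ ?_)))
      refine h.match_of _ (by rw [hn2]; rfl) rfl ?_ (fun _ _ => False)
        (h.notail_prox (fun j hj => by omega)) ?_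
      · intro i hi
        have hi2 : i < 2 := hi
        interval_cases i
        · simpa [diagJ] using h3.symm
        · simpa [diagJ] using hw1.symm
      · intro i j hi hj
        have hi2 : i < 2 := hi
        have hj2 : j < 2 := hj
        simp only [diagJ]
        omega
    · have hw2 : ∀ i, 0 < i → i < n → w i = 2 := by
        intro i h0 hi
        have b1 := h.anti' (i := 1) (j := i) h0 hi
        have b2 := hle 1 (by omega)
        have b3 := hge i hi
        omega
      have hn4 : n ≤ 4 := by
        by_contra hne
        have := h.c_sum (Finset.range 5) (by intro i hi; simp at hi; omega)
        simp only [Finset.sum_range_succ, Finset.sum_range_zero] at this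
        have a1 := h.bound 1 (by omega) (by omega)
        have a2 := h.bound 2 (by omega) (by omega)
        have a3 := h.bound 3 (by omega) (by omega)
        have a4 := h.bound 4 (by omega) (by omega)
        have b1 := hge 1 (by omega)
        have b2 := hge 2 (by omega)
        have b3 := hge 3 (by omega)
        have b4 := hge 4 (by omega)
        omega
      exact ansD (2 * n + 2) (by omega) (by omega) (hQ _ (matchD_even h h3 hw2))
  · have hn2 : n = 1 ∨ (n = 2 ∧ w 1 = 2) := by
      by_cases h1 : n = 1
      · exact Or.inl h1
      · have a1 := h.bound 1 (by omega) (by omega)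
        have a2 := two 1 (by omega) (by omega)
        have b1 := hge 1 (by omega)
        refine Or.inr ⟨?_, by omega⟩
        by_contra hne
        have a3 := h.bound 2 (by omega) (by omega)
        have a4 := three 1 2 (by omega) (by omega) (by omega)
        have b2 := hge 2 (by omega)
        omega
    unfold Answer
    rcases hn2 with hn1 | ⟨hn2, hw1⟩
    · have key : Q diagX10 := by
        refine hQ _ (h.match_of _ (by rw [hn1]; rfl) rfl ?_ (fun _ _ => False)
          (h.notail_prox (fun j hj => by omega)) ?_)
        · intro i hi
          have hi2 : i < 1 := hi
          interval_cases i
          exact h3.symm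
        · intro i j hi hj
          simp only [diagX10, and_false, false_and, true_and, and_true, or_false, false_or, iff_false, false_iff, not_and]
      simp [key]
    · have key : Q diagX12 := by
        refine hQ _ (h.match_of _ (by rw [hn2]; rfl) rfl ?_ (fun _ _ => False)
          (h.notail_prox (fun j hj => by omega)) ?_)
        · intro i hi
          have hi2 : i < 2 := hi
          interval_cases i
          · simpa [diagX12] using h3.symm
          · simpa [diagX12] using hw1.symm
        · intro i j hi hj
          simp only [diagX12, and_false, false_and, true_and, and_true, or_false, false_or, iff_false, false_iff, not_and]
      simp [key]

theorem classify_tail3 (h : ChainData n w p c) (hl : w (n - 1) = 1) (Q : PreDiagram → Prop)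
    (hQ : ∀ E, Match n w p E → Q E) (t : ℕ) (ht : t ≤ 4) (hn : n = t + 3) (hwt : 2 ≤ w t)
    (hall : ∀ i, t < i → i < n → p i t) : Answer Q := by
  have hr := h.root_bound
  have hge : ∀ i, i ≤ t → 2 ≤ w i := fun i hi => hwt.trans (h.anti' (by omega) (by omega))
  have hle : ∀ i, i < n → w i ≤ w 0 := fun i hi => h.anti' (by omega) (by omega)
  have hw2 : w (t + 2) = 1 := by rw [hn] at hl; exact hl
  have hw1 := h.w_pos (t + 1) (by omega)
  have hsum := (h.remote (t + 2) t (hall _ (by omega) (by omega)) le_rfl).2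
  have hsat := h.sat_bound (t + 2) t (hall _ (by omega) (by omega)) le_rfl
  have htot := h.c_sum (Finset.range n) (by intro i hi; simpa using hi)
  by_cases h02 : w 0 = 2
  · refine ansA (2 * t + 2) (by omega) (by omega) (hQ _ (matchA_even h t hn hall ?_ ?_ hw2))
    · intro i hi
      have := hge i hi
      have := hle i (by omega)
      omega
    · have := hle t (by omega)
      omega
  have ht2 : t ≤ 2 := by
    by_contra hne
    have := h.c_sum {0, 1, 2, 3, t + 2} (by intro i hi; simp at hi; omega)
    rw [Finset.sum_insert (by simp), Finset.sum_insert (by simp <;> omega),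
      Finset.sum_insert (by simp <;> omega), Finset.sum_pair (by omega)] at this
    have a1 := h.bound 1 (by omega) (by omega)
    have a2 := h.bound 2 (by omega) (by omega)
    have a3 := h.bound 3 (by omega) (by omega)
    have b1 := hge 1 (by omega)
    have b2 := hge 2 (by omega)
    have b3 := hge 3 (by omega)
    omega
  interval_cases t
  · -- a root followed by two vertices proximate to it
    subst hn
    simp only [Finset.sum_range_succ, Finset.sum_range_zero] at htot
    have a1 := h.bound 1 (by omega) (by omega)
    have hX := h.tail_prox 0 hall (fun j hj => by omega)
    simp only [Nat.zero_add] at *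
    have hcase : (w 0 = 3 ∧ w 1 = 1) ∨ (w 0 = 3 ∧ w 1 = 2) ∨ (w 0 = 4 ∧ w 1 = 1) := by omega
    rcases hcase with ⟨c0, c1⟩ | ⟨c0, c1⟩ | ⟨c0, c1⟩
    · exact ansD 5 (by omega) (by omega)
        (hQ _ (matchD_odd h 0 rfl hall c0 (fun i _ _ => by omega) c1 hw2 hX))
    · have key : Q (diagE 7) := by
        refine hQ _ (h.match_of _ rfl rfl ?_ _ hX ?_)
        · intro i hi
          have hi2 : i < 3 := hi
          interval_cases i
          · simpa [diagE] using c0.symm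
          · simpa [diagE] using c1.symm
          · simpa [diagE] using hw2.symm
        · intro i j hi hj
          have hi2 : i < 3 := hi
          simp only [diagE, and_false, false_and, true_and, and_true, or_false, false_or, iff_false, false_iff, not_and]
          omega
      unfold Answer
      simp [key]
    · have key : Q diagX11 := by
        refine hQ _ (h.match_of _ rfl rfl ?_ _ hX ?_)
        · intro i hi
          have hi2 : i < 3 := hi
          interval_cases i
          · simpa [diagX11] using c0.symm
          · simpa [diagX11] using c1.symm
          · simpa [diagX11] using hw2.symm
        · intro i j hi hj
          have hi2 : i < 3 := hi
          simp only [diagX11]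
          omega
      unfold Answer
      simp [key]
  · subst hn
    simp only [Finset.sum_range_succ, Finset.sum_range_zero] at htot
    have a1 := h.bound 1 (by omega) (by omega)
    have a2 := h.bound 2 (by omega) (by omega)
    have l1 := hle 1 (by omega)
    simp only [Nat.zero_add, Nat.reduceAdd] at *
    have hcase : w 0 = 3 ∧ w 2 = 1 ∧ (w 1 = 2 ∨ w 1 = 3) := by omega
    obtain ⟨c0, c2, c1⟩ := hcase
    rcases c1 with c1 | c1
    · by_cases hp20 : p 2 0
      · have hX : ∀ i j, j + 2 ≤ i → i < 4 → (p i j ↔ i = j + 2) := by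
          intro i j hij hi
          constructor
          · intro hp
            by_contra hne
            have hi3 : i = 3 := by omega
            have hj0 : j = 0 := by omega
            subst hi3 hj0
            have := h.p_unique 3 0 1 hp (hall 3 (by omega) (by omega)) (by omega) (by omega)
            omega
          · rintro rfl
            have : j = 0 ∨ j = 1 := by omega
            rcases this with rfl | rfl
            · exact hp20
            · exact hall 3 (by omega) (by omega)
        have key : Q (diagE 8) := by
          refine hQ _ (h.match_of _ rfl rfl ?_ (fun i j => i = j + 2) hX ?_)
          · intro i hi
            have hi2 : i < 4 := hi
            interval_cases i
            · simpa [diagE] using c0.symm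
            · simpa [diagE] using c1.symm
            · simpa [diagE] using c2.symm
            · simpa [diagE] using hw2.symm
          · intro i j hi hj
            have hi2 : i < 4 := hi
            simp only [diagE, and_false, false_and, true_and, and_true, or_false, false_or, iff_false, false_iff, not_and]
            omega
        unfold Answer
        simp [key]
      · have hX : ∀ i j, j + 2 ≤ i → i < 4 → (p i j ↔ j = 1) := by
          intro i j hij hi
          constructor
          · intro hp
            by_contra hne
            have hj0 : j = 0 := by omega
            subst hj0
            exact hp20 (h.remote i 0 hp hij).1
          · rintro rfl
            exact hall i (by omega) hi
        refine ansD 7 (by omega) (by omega)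
          (hQ _ (matchD_odd h 1 rfl hall c0 (fun i h1 h2 => ?_) c2 hw2 hX))
        have : i = 1 := by omega
        rw [this, c1]
    · have hX := h.tail_prox 1 hall (fun j hj => by
        have : j = 0 := by omega
        subst this
        simp only [Nat.zero_add]
        omega)
      have key : Q (diagJ 2 1) := by
        refine hQ _ (h.match_of _ rfl rfl ?_ _ hX ?_)
        · intro i hi
          have hi2 : i < 4 := hi
          interval_cases i
          · simpa [diagJ] using c0.symm
          · simpa [diagJ] using c1.symm
          · simpa [diagJ] using c2.symm
          · simpa [diagJ] using hw2.symm
        · intro i j hi hj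
          have hi2 : i < 4 := hi
          simp only [diagJ, and_false, false_and, true_and, and_true, or_false, false_or, iff_false, false_iff, not_and]
          omega
      unfold Answer
      simp [key]
  · subst hn
    simp only [Finset.sum_range_succ, Finset.sum_range_zero] at htot
    have a1 := h.bound 1 (by omega) (by omega)
    have a2 := h.bound 2 (by omega) (by omega)
    have a3 := h.bound 3 (by omega) (by omega)
    have l1 := hge 1 (by omega)
    simp only [Nat.zero_add, Nat.reduceAdd] at *
    have hcase : w 0 = 3 ∧ w 1 = 2 ∧ w 2 = 2 ∧ w 3 = 1 := by omega
    obtain ⟨c0, c1, c2, c3⟩ := hcase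
    refine ansD 9 (by omega) (by omega)
      (hQ _ (matchD_odd h 2 rfl hall c0 (fun i h1 h2 => ?_) c3 hw2
        (h.tail_prox 2 hall (fun j hj => ?_))))
    · interval_cases i
      · exact c1
      · exact c2
    · interval_cases j <;> simp only [Nat.zero_add, Nat.reduceAdd] <;> omega

theorem classify_tail4 (h : ChainData n w p c) (hl : w (n - 1) = 1) (Q : PreDiagram → Prop)
    (hQ : ∀ E, Match n w p E → Q E) (t : ℕ) (hn : n = t + 4)
    (hall : ∀ i, t < i → i < n → p i t) : Answer Q := by
  have hr := h.root_bound
  have hw3 : w (t + 3) = 1 := by rw [hn] at hl; exact hl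
  have hw1 := h.w_pos (t + 1) (by omega)
  have hw2 := h.w_pos (t + 2) (by omega)
  have hsum := h.pr3 t _ _ _ (hall (t + 1) (by omega) (by omega))
    (hall (t + 2) (by omega) (by omega)) (hall (t + 3) (by omega) (by omega)) (by omega) (by omega)
  have hs2 := h.sat_bound (t + 2) t (hall _ (by omega) (by omega)) le_rfl
  have hs3 := h.sat_bound (t + 3) t (hall _ (by omega) (by omega)) (by omega)
  have hle : w t ≤ w 0 := h.anti' (by omega) (by omega)
  have ht : t = 0 := by
    by_contra hne
    have a1 := h.bound t (by omega) (by omega)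
    have := h.c_sum {0, t, t + 2, t + 3} (by intro i hi; simp at hi; omega)
    rw [Finset.sum_insert (by simp <;> omega), Finset.sum_insert (by simp),
      Finset.sum_pair (by omega)] at this
    omega
  subst ht
  subst hn
  have htot := h.c_sum (Finset.range 4) (by intro i hi; simpa using hi)
  simp only [Finset.sum_range_succ, Finset.sum_range_zero] at htot
  have a1 := h.bound 1 (by omega) (by omega)
  have hX := h.tail_prox 0 hall (fun j hj => by omega)
  simp only [Nat.zero_add] at *
  have hcase : w 1 = 1 ∧ w 2 = 1 ∧ (w 0 = 3 ∨ w 0 = 4) := by omega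
  obtain ⟨c1, c2, c0⟩ := hcase
  unfold Answer
  rcases c0 with c0 | c0
  · have key : Q (diagE 6) := by
      refine hQ _ (h.match_of _ rfl rfl ?_ _ hX ?_)
      · intro i hi
        have hi2 : i < 4 := hi
        interval_cases i
        · simpa [diagE] using c0.symm
        · simpa [diagE] using c1.symm
        · simpa [diagE] using c2.symm
        · simpa [diagE] using hw3.symm
      · intro i j hi hj
        have hi2 : i < 4 := hi
        simp only [diagE, and_false, false_and, true_and, and_true, or_false, false_or, iff_false, false_iff, not_and]
        omega
    simp [key]
  · have key : Q diagZ11 := by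
      refine hQ _ (h.match_of _ rfl rfl ?_ _ hX ?_)
      · intro i hi
        have hi2 : i < 4 := hi
        interval_cases i
        · simpa [diagZ11] using c0.symm
        · simpa [diagZ11] using c1.symm
        · simpa [diagZ11] using c2.symm
        · simpa [diagZ11] using hw3.symm
      · intro i j hi hj
        have hi2 : i < 4 := hi
        simp only [diagZ11]
        omega
    simp [key]

theorem classify (h : ChainData n w p c) (Q : PreDiagram → Prop)
    (hQ : ∀ E, Match n w p E → Q E) : Answer Q := by
  have hn := h.n_pos
  have hpos := h.w_pos (n - 1) (by omega)
  by_cases hl : w (n - 1) = 1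
  · obtain ⟨t, h1, h2, h3, h4⟩ := h.tail hl
    rcases h3 with h3 | h3
    · exact classify_tail3 h hl Q hQ t h1 h3 h2 h4
    · exact classify_tail4 h hl Q hQ t h3 h4
  · exact classify_notail h (by omega) Q hQ

end Classification

end PreDiagram

open PreDiagram in
/-- A nonempty minimal Enriques diagram with exactly one root and `cod(D) ≤ 10` is
isomorphic to one of `A_1, …, A_10`, `D_4, …, D_10`, `J_{2,0}`, `J_{2,1}`, `E_6`, `E_7`,
`E_8`, `X_{1,0}`, `X_{1,1}`, `X_{1,2}`, `Z_11`, `Y_{1,1}`. -/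
theorem statement6 (D : PreDiagram) (hD : D.IsMED) (hne : 0 < D.n) (R : Fin D.n)
    (hR : D.IsRoot R) (huniq : ∀ v, D.IsRoot v → v = R) (hcod : D.cod ≤ 10) :
    (∃ k, 1 ≤ k ∧ k ≤ 10 ∧ Isomorphic D (diagA k)) ∨
    (∃ k, 4 ≤ k ∧ k ≤ 10 ∧ Isomorphic D (diagD k)) ∨
    Isomorphic D (diagJ 2 0) ∨ Isomorphic D (diagJ 2 1) ∨
    Isomorphic D (diagE 6) ∨ Isomorphic D (diagE 7) ∨ Isomorphic D (diagE 8) ∨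
    Isomorphic D diagX10 ∨ Isomorphic D diagX11 ∨ Isomorphic D diagX12 ∨
    Isomorphic D diagZ11 ∨ Isomorphic D diagY11 := by
  by_cases hu : ∀ V a b, D.ImPred V a → D.ImPred V b → a = b
  · obtain ⟨w, p, c, h1, h2⟩ := exists_chain hD hcod hR huniq hu
    exact classify h1 (fun E => Isomorphic D E) h2
  · push Not at hu
    obtain ⟨V, a, b, ha, hb, hab⟩ := hu
    have key := branchY hD hcod hR huniq ha hb hab
    simp [key]
end

section
/- For every i ≥ 2, the diagram D_{2i} satisfies cod = 2i, deg = 3i, dim = i, r = 3, δ = i+1, μ = 2i; and the diagram D_{2i+1} satisfies cod = 2i+1, deg = 3i+2, dim = i+1, r = 2, δ = i+1, μ = 2i+1. -/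
open Classical Finset

namespace PreDiagram

/-- A common form of the diagrams `D_k`, with `n`, `m` and the parity separated. -/
def genD (n m : ℕ) (p : Prop) : PreDiagram where
  n := n
  parent := chainParent n
  wt := fun v => if v.val = 0 then 3 else if v.val ≤ m then 2 else 1
  prox := fun a b => a.val = b.val + 1 ∨ (p ∧ a.val = m + 2 ∧ b.val = m)

lemma diagD_even (j : ℕ) : diagD (2 * (j + 2)) = genD (j + 1) j False := by
  have h1 : (2 * (j + 2) - 4) / 2 = j := by omega
  have h2 : (2 * (j + 2)) % 2 = 0 := by omega
  have h : diagD (2 * (j + 2)) = genD ((2 * (j + 2) - 4) / 2 +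
    (if (2 * (j + 2)) % 2 = 0 then 1 else 3)) ((2 * (j + 2) - 4) / 2)
    ((2 * (j + 2)) % 2 = 1) := rfl
  rw [h, h1, h2]; simp

lemma diagD_odd (j : ℕ) : diagD (2 * (j + 2) + 1) = genD (j + 3) j True := by
  have h1 : (2 * (j + 2) + 1 - 4) / 2 = j := by omega
  have h2 : (2 * (j + 2) + 1) % 2 = 1 := by omega
  have h : diagD (2 * (j + 2) + 1) = genD ((2 * (j + 2) + 1 - 4) / 2 +
    (if (2 * (j + 2) + 1) % 2 = 0 then 1 else 3)) ((2 * (j + 2) + 1 - 4) / 2)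
    ((2 * (j + 2) + 1) % 2 = 1) := rfl
  rw [h, h1, h2]; simp

lemma imPred_gen (n m : ℕ) (p : Prop) (a b : Fin n) :
    (genD n m p).ImPred a b ↔ b.val = a.val + 1 := by
  have : (genD n m p).ImPred a b ↔ chainParent n b = some a := Iff.rfl
  rw [this]
  unfold chainParent
  split_ifs with h
  · simp; omega
  · simp [Fin.ext_iff]; omega

lemma rts_gen (n m : ℕ) (p : Prop) : (genD (n + 1) m p).rts = 1 := by
  have : (univ.filter (fun v : Fin (n + 1) => (genD (n + 1) m p).IsRoot v)) = {0} := by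
    ext v
    have : (genD (n + 1) m p).IsRoot v ↔ chainParent (n + 1) v = none := Iff.rfl
    simp only [mem_filter, mem_univ, true_and, mem_singleton, this]
    unfold chainParent
    split_ifs with h
    · simp [Fin.ext_iff, h]
    · simp [Fin.ext_iff, h]
  have h2 : (genD (n + 1) m p).rts =
    (univ.filter (fun v : Fin (n + 1) => (genD (n + 1) m p).IsRoot v)).card := rfl
  rw [h2, this]; simp

lemma sat_even (n m : ℕ) (v : Fin n) : ¬ (genD n m False).IsSatellite v := by
  rintro ⟨t, h1, _, h2⟩
  have h1' : v.val = t.val + 1 ∨ (False ∧ v.val = m + 2 ∧ t.val = m) := h1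
  refine h2 ((imPred_gen n m False t v).2 ?_)
  tauto

lemma sat_odd (m : ℕ) (v : Fin (m + 3)) :
    (genD (m + 3) m True).IsSatellite v ↔ v = Fin.last (m + 2) := by
  constructor
  · rintro ⟨t, h1, _, h2⟩
    have h1' : v.val = t.val + 1 ∨ (True ∧ v.val = m + 2 ∧ t.val = m) := h1
    have h3 : ¬ v.val = t.val + 1 := fun h => h2 ((imPred_gen (m + 3) m True t v).2 h)
    rw [Fin.ext_iff, Fin.val_last]
    tauto
  · rintro rfl
    refine ⟨(⟨m, by omega⟩ : Fin (m + 3)), Or.inr ⟨trivial, rfl, rfl⟩, ?_, ?_⟩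
    · exact Relation.TransGen.tail (Relation.TransGen.single
        ((imPred_gen (m + 3) m True ⟨m, by omega⟩ ⟨m + 1, by omega⟩).2 rfl))
        ((imPred_gen (m + 3) m True ⟨m + 1, by omega⟩ (Fin.last (m + 2))).2 rfl)
    · rw [imPred_gen (m + 3) m True ⟨m, by omega⟩ (Fin.last (m + 2))]
      simp

lemma frs_even (n m : ℕ) : (genD n m False).frs = n := by
  have h2 : (genD n m False).frs =
    (univ.filter (fun v : Fin n => ¬ (genD n m False).IsSatellite v)).card := rfl
  rw [h2, filter_true_of_mem (fun v _ => sat_even n m v)]; simp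

lemma frs_odd (m : ℕ) : (genD (m + 3) m True).frs = m + 2 := by
  have h2 : (genD (m + 3) m True).frs =
    (univ.filter (fun v : Fin (m + 3) => ¬ (genD (m + 3) m True).IsSatellite v)).card := rfl
  rw [h2]
  simp only [sat_odd]
  rw [filter_ne', card_erase_of_mem (mem_univ _)]
  simp

lemma sum_even (m : ℕ) (f : ℕ → ℕ) :
    ∑ v : Fin (m + 1), f ((genD (m + 1) m False).wt v) = f 3 + m * f 2 := by
  have : ∀ v : Fin (m + 1), f ((genD (m + 1) m False).wt v) =
    f (if v.val = 0 then 3 else if v.val ≤ m then 2 else 1) := fun _ => rfl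
  simp only [this]
  rw [Fin.sum_univ_succ]
  have h : ∀ x : Fin m, (x : ℕ) + 1 ≤ m := fun x => x.isLt
  simp [h]

lemma sum_odd (m : ℕ) (f : ℕ → ℕ) :
    ∑ v : Fin (m + 3), f ((genD (m + 3) m True).wt v) = f 3 + m * f 2 + 2 * f 1 := by
  have : ∀ v : Fin (m + 3), f ((genD (m + 3) m True).wt v) =
    f (if v.val = 0 then 3 else if v.val ≤ m then 2 else 1) := fun _ => rfl
  simp only [this]
  rw [Fin.sum_univ_castSucc, Fin.sum_univ_castSucc, Fin.sum_univ_succ]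
  have h : ∀ x : Fin m, (x : ℕ) + 1 ≤ m := fun x => x.isLt
  simp [h]
  ring

/-- Swapping the summation: each vertex `w` is counted once for each vertex it is proximate to. -/
lemma rCh_swap (D : PreDiagram) : D.rCh =
    ∑ w, (D.wt w : ℤ) * (1 - ((univ.filter (fun v => D.prox w v)).card : ℤ)) := by
  unfold rCh
  rw [sum_sub_distrib]
  simp only [sum_filter, mul_sub, mul_one, sum_sub_distrib]
  rw [sum_comm]
  congr 1
  refine sum_congr rfl fun w _ => ?_
  rw [← sum_filter, sum_const, nsmul_eq_mul, mul_comm]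

lemma card_zero (n m : ℕ) (p : Prop) :
    (univ.filter (fun v : Fin (n + 1) => (genD (n + 1) m p).prox (0 : Fin (n + 1)) v)).card = 0 := by
  rw [card_eq_zero, filter_eq_empty_iff]
  rintro v _ (h | ⟨_, h, _⟩)
  · have h' : (0 : ℕ) = v.val + 1 := h
    omega
  · have h' : (0 : ℕ) = m + 2 := h
    omega

lemma card_mid (n m : ℕ) (p : Prop) (w : Fin (n + 1)) (h0 : w.val ≠ 0)
    (hw : ¬ (p ∧ w.val = m + 2)) :
    (univ.filter (fun v : Fin (n + 1) => (genD (n + 1) m p).prox w v)).card = 1 := by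
  rw [card_eq_one]
  refine ⟨⟨w.val - 1, by omega⟩, ?_⟩
  ext v
  have : (genD (n + 1) m p).prox w v ↔ (w.val = v.val + 1 ∨ (p ∧ w.val = m + 2 ∧ v.val = m)) :=
    Iff.rfl
  simp only [mem_filter, mem_univ, true_and, mem_singleton, this, Fin.ext_iff]
  constructor
  · rintro (h | ⟨h1, h2, _⟩)
    · omega
    · exact absurd ⟨h1, h2⟩ hw
  · intro h; left; omega

lemma card_last (m : ℕ) :
    (univ.filter (fun v : Fin (m + 3) =>
      (genD (m + 3) m True).prox (Fin.last (m + 2)) v)).card = 2 := by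
  rw [card_eq_two]
  refine ⟨⟨m, by omega⟩, ⟨m + 1, by omega⟩, by simp, ?_⟩
  ext v
  have : (genD (m + 3) m True).prox (Fin.last (m + 2)) v ↔
      (m + 2 = v.val + 1 ∨ (True ∧ m + 2 = m + 2 ∧ v.val = m)) := Iff.rfl
  simp only [mem_filter, mem_univ, true_and, mem_singleton, mem_insert, this, Fin.ext_iff]
  omega

lemma rCh_even (m : ℕ) : (genD (m + 1) m False).rCh = 3 := by
  rw [rCh_swap]
  change ∑ w : Fin (m + 1), ((genD (m + 1) m False).wt w : ℤ) *
    (1 - ((univ.filter (fun v : Fin (m + 1) => (genD (m + 1) m False).prox w v)).card : ℤ)) = 3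
  rw [Fin.sum_univ_succ, card_zero, sum_eq_zero]
  · simp [genD]
  · intro x _
    rw [card_mid _ _ _ _ (by simp) (by simp)]
    simp

lemma rCh_odd (m : ℕ) : (genD (m + 3) m True).rCh = 2 := by
  rw [rCh_swap]
  change ∑ w : Fin (m + 3), ((genD (m + 3) m True).wt w : ℤ) *
    (1 - ((univ.filter (fun v : Fin (m + 3) => (genD (m + 3) m True).prox w v)).card : ℤ)) = 2
  rw [Fin.sum_univ_succ, Fin.sum_univ_castSucc, card_zero, sum_eq_zero, Fin.succ_last, card_last]
  · simp [genD]
  · intro x _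
    rw [card_mid _ _ _ _ (by simp) (by have := x.isLt; simp; omega)]
    simp

end PreDiagram

open PreDiagram in
/-- Characters of the diagrams `D_{2i}` and `D_{2i+1}` for `i ≥ 2` (Table 2-1). -/
theorem statement9 (i : ℕ) (hi : 2 ≤ i) :
    ((diagD (2 * i)).cod = 2 * (i : ℤ) ∧
     (diagD (2 * i)).degD = 3 * i ∧
     (diagD (2 * i)).dimD = i ∧
     (diagD (2 * i)).rCh = 3 ∧
     (diagD (2 * i)).deltaD = i + 1 ∧
     (diagD (2 * i)).mu = 2 * (i : ℤ)) ∧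
    ((diagD (2 * i + 1)).cod = 2 * (i : ℤ) + 1 ∧
     (diagD (2 * i + 1)).degD = 3 * i + 2 ∧
     (diagD (2 * i + 1)).dimD = i + 1 ∧
     (diagD (2 * i + 1)).rCh = 2 ∧
     (diagD (2 * i + 1)).deltaD = i + 1 ∧
     (diagD (2 * i + 1)).mu = 2 * (i : ℤ) + 1) := by
  obtain ⟨j, rfl⟩ : ∃ j, i = j + 2 := ⟨i - 2, by omega⟩
  rw [diagD_even, diagD_odd]
  have e1 : (genD (j + 1) j False).degD = 3 * (j + 2) :=
    (sum_even j (fun w => (w + 1).choose 2)).trans (by simp [Nat.choose]; ring)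
  have e2 : (genD (j + 1) j False).deltaD = j + 2 + 1 :=
    (sum_even j (fun w => w.choose 2)).trans (by simp [Nat.choose]; ring)
  have e3 : (genD (j + 1) j False).rts = 1 := rts_gen j j False
  have e4 : (genD (j + 1) j False).dimD = j + 2 := by
    unfold dimD; rw [e3, frs_even]; ring
  have o1 : (genD (j + 3) j True).degD = 3 * (j + 2) + 2 :=
    (sum_odd j (fun w => (w + 1).choose 2)).trans (by simp [Nat.choose]; ring)
  have o2 : (genD (j + 3) j True).deltaD = j + 2 + 1 :=
    (sum_odd j (fun w => w.choose 2)).trans (by simp [Nat.choose]; ring)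
  have o3 : (genD (j + 3) j True).rts = 1 := rts_gen (j + 2) j True
  have o4 : (genD (j + 3) j True).dimD = j + 2 + 1 := by
    unfold dimD; rw [o3, frs_odd]; ring
  refine ⟨⟨?_, e1, e4, rCh_even j, e2, ?_⟩, ⟨?_, o1, o4, rCh_odd j, o2, ?_⟩⟩
  · unfold cod; rw [e1, e4]; push_cast; ring
  · unfold mu; rw [e2, e3, rCh_even]; push_cast; ring
  · unfold cod; rw [o1, o4]; push_cast; ring
  · unfold mu; rw [o2, o3, rCh_odd]; push_cast; ring
end

section
/- For every l ≥ 2 and i ≥ 0: the diagram J_{l,2i} satisfies cod = 2i−1+5l, deg = 3i+6l, dim = i+1+l, r = 3, δ = i+3l, μ = 2i−2+6l; and the diagram J_{l,2i+1} satisfies cod = 2i+5l, deg = 3i+2+6l, dim = i+2+l, r = 2, δ = i+3l, μ = 2i−1+6l. -/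
open Classical Finset

namespace PreDiagram

/-- The weight of the vertex number `v` of `J_{l,k}`, as a function on `ℕ`. -/
def jwt (l k v : ℕ) : ℕ := if v ≤ l - 1 then 3 else if v ≤ l - 1 + k / 2 then 2 else 1

lemma jn_even (l i : ℕ) (hl : 2 ≤ l) : (diagJ l (2 * i)).n = l + i := by
  simp [diagJ]; omega

lemma jn_odd (l i : ℕ) (hl : 2 ≤ l) : (diagJ l (2 * i + 1)).n = l + i + 2 := by
  have h : (2 * i + 1) % 2 ≠ 0 := by omega
  simp only [diagJ, if_neg h]; omega

lemma sum_block (l k : ℕ) (hl : 2 ≤ l) (F : ℕ → ℕ) :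
    ∑ v ∈ range (l + k / 2), F (jwt l k v) = l * F 3 + (k / 2) * F 2 := by
  rw [Finset.sum_range_add]
  congr 1
  · rw [Finset.sum_congr rfl (g := fun _ => F 3)]
    · simp
    · intro x hx
      rw [Finset.mem_range] at hx
      have : x ≤ l - 1 := by omega
      simp [jwt, this]
  · rw [Finset.sum_congr rfl (g := fun _ => F 2)]
    · simp
    · intro x hx
      rw [Finset.mem_range] at hx
      have h1 : ¬ (l + x ≤ l - 1) := by omega
      have h2 : l + x ≤ l - 1 + k / 2 := by omega
      simp only [jwt, if_neg h1, if_pos h2]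

lemma sum_jwt (l k : ℕ) (F : ℕ → ℕ) :
    ∑ v, F ((diagJ l k).wt v) = ∑ v ∈ range (diagJ l k).n, F (jwt l k v) :=
  Fin.sum_univ_eq_sum_range (fun v => F (jwt l k v)) (diagJ l k).n

lemma sum_even_s11 (l i : ℕ) (hl : 2 ≤ l) (F : ℕ → ℕ) :
    ∑ v, F ((diagJ l (2 * i)).wt v) = l * F 3 + i * F 2 := by
  have h : 2 * i / 2 = i := by omega
  have := sum_block l (2 * i) hl F
  rw [h] at this
  rw [sum_jwt, jn_even l i hl, this]

lemma sum_odd_s11 (l i : ℕ) (hl : 2 ≤ l) (F : ℕ → ℕ) :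
    ∑ v, F ((diagJ l (2 * i + 1)).wt v) = l * F 3 + i * F 2 + 2 * F 1 := by
  have h : (2 * i + 1) / 2 = i := by omega
  have := sum_block l (2 * i + 1) hl F
  rw [h] at this
  have e1 : jwt l (2 * i + 1) (l + i) = 1 := by
    unfold jwt; rw [if_neg (by omega), if_neg (by omega)]
  have e2 : jwt l (2 * i + 1) (l + i + 1) = 1 := by
    unfold jwt; rw [if_neg (by omega), if_neg (by omega)]
  rw [sum_jwt, jn_odd l i hl, Finset.sum_range_succ, Finset.sum_range_succ, this, e1, e2]
  ring

lemma imPred_iff (l k : ℕ) (a b : Fin (diagJ l k).n) :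
    (diagJ l k).ImPred a b ↔ b.val = a.val + 1 := by
  change chainParent _ b = some a ↔ _
  unfold chainParent
  split_ifs with h
  · simp; omega
  · rw [Option.some_inj, Fin.ext_iff]
    simp only
    omega

lemma isRoot_iff (l k : ℕ) (a : Fin (diagJ l k).n) :
    (diagJ l k).IsRoot a ↔ a.val = 0 := by
  change chainParent _ a = none ↔ _
  unfold chainParent
  split_ifs with h <;> simp [h]

lemma isSat_iff (l k : ℕ) (a : Fin (diagJ l k).n) :
    (diagJ l k).IsSatellite a ↔ (k % 2 = 1 ∧ a.val = (l - 1) + k / 2 + 2) := by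
  constructor
  · rintro ⟨t, hp, -, hi⟩
    rw [imPred_iff] at hi
    rcases hp with hp | ⟨h1, h2, -⟩
    · exact absurd hp hi
    · exact ⟨h1, h2⟩
  · rintro ⟨h1, h2⟩
    have ha := a.isLt
    refine ⟨⟨(l - 1) + k / 2, by omega⟩, Or.inr ⟨h1, h2, rfl⟩, ?_, ?_⟩
    · refine Relation.TransGen.tail (b := ⟨(l - 1) + k / 2 + 1, by omega⟩)
        (Relation.TransGen.single ?_) ?_
      · rw [imPred_iff]
      · rw [imPred_iff]; simpa using h2
    · rw [imPred_iff]; simp only; omega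

lemma rts_eq (l k : ℕ) (hn : 0 < (diagJ l k).n) : (diagJ l k).rts = 1 := by
  unfold rts
  rw [Finset.card_eq_one]
  refine ⟨⟨0, hn⟩, ?_⟩
  ext v
  simp [isRoot_iff, Fin.ext_iff]

lemma frs_even_s11 (l i : ℕ) (hl : 2 ≤ l) : (diagJ l (2 * i)).frs = l + i := by
  unfold frs
  rw [Finset.filter_true_of_mem]
  · simp [jn_even l i hl]
  · intro v _
    rw [IsFree, isSat_iff]; omega

lemma frs_odd_s11 (l i : ℕ) (hl : 2 ≤ l) : (diagJ l (2 * i + 1)).frs = l + i + 1 := by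
  have hn := jn_odd l i hl
  unfold frs
  have : univ.filter (fun v => (diagJ l (2 * i + 1)).IsFree v) =
      univ.erase ⟨l + i + 1, by omega⟩ := by
    ext v
    simp only [Finset.mem_filter, Finset.mem_univ, true_and, Finset.mem_erase, and_true,
      IsFree, isSat_iff, ne_eq, Fin.ext_iff]
    omega
  rw [this, Finset.card_erase_of_mem (Finset.mem_univ _)]
  simp [hn]

lemma inner_sum (l k : ℕ) (w : Fin (diagJ l k).n) :
    ∑ v, (if (diagJ l k).prox w v then ((diagJ l k).wt w : ℤ) else 0) =
      (if w.val = 0 then 0 else ((diagJ l k).wt w : ℤ)) +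
      (if k % 2 = 1 ∧ w.val = (l - 1) + k / 2 + 2 then ((diagJ l k).wt w : ℤ) else 0) := by
  have hw := w.isLt
  have key : ∀ v : Fin (diagJ l k).n,
      (if (diagJ l k).prox w v then ((diagJ l k).wt w : ℤ) else 0) =
      (if w.val = v.val + 1 then ((diagJ l k).wt w : ℤ) else 0) +
      (if k % 2 = 1 ∧ w.val = (l - 1) + k / 2 + 2 ∧ v.val = (l - 1) + k / 2 then
        ((diagJ l k).wt w : ℤ) else 0) := by
    intro v
    have : (diagJ l k).prox w v ↔ (w.val = v.val + 1 ∨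
      (k % 2 = 1 ∧ w.val = (l - 1) + k / 2 + 2 ∧ v.val = (l - 1) + k / 2)) := Iff.rfl
    simp only [this]
    split_ifs <;> first | omega | simp_all
  rw [Finset.sum_congr rfl (fun v _ => key v), Finset.sum_add_distrib]
  congr 1
  · split_ifs with h
    · apply Finset.sum_eq_zero
      intro v _
      rw [if_neg (by omega)]
    · rw [Finset.sum_eq_single ⟨w.val - 1, by omega⟩]
      · rw [if_pos (by simp only; omega)]
      · intro b _ hb
        rw [ne_eq, Fin.ext_iff] at hb
        simp only at hb
        rw [if_neg (by omega)]
      · simp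
  · split_ifs with h
    · rw [Finset.sum_eq_single ⟨(l - 1) + k / 2, by omega⟩]
      · rw [if_pos ⟨h.1, h.2, rfl⟩]
      · intro b _ hb
        rw [ne_eq, Fin.ext_iff] at hb
        simp only at hb
        rw [if_neg (by omega)]
      · simp
    · apply Finset.sum_eq_zero
      intro v _
      rw [if_neg (by tauto)]

lemma rCh_eq (l k : ℕ) (hn : 0 < (diagJ l k).n) :
    (diagJ l k).rCh = 3 - ∑ w : Fin (diagJ l k).n,
      (if k % 2 = 1 ∧ w.val = (l - 1) + k / 2 + 2 then ((diagJ l k).wt w : ℤ) else 0) := by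
  unfold rCh
  rw [Finset.sum_sub_distrib]
  simp only [Finset.sum_filter]
  rw [Finset.sum_comm, Finset.sum_congr rfl (fun w _ => inner_sum l k w),
    Finset.sum_add_distrib]
  have : ∑ w : Fin (diagJ l k).n, ((diagJ l k).wt w : ℤ) -
      ∑ w : Fin (diagJ l k).n, (if w.val = 0 then 0 else ((diagJ l k).wt w : ℤ)) = 3 := by
    rw [← Finset.sum_sub_distrib, Finset.sum_eq_single ⟨0, hn⟩]
    · simp [diagJ]
    · intro b _ hb
      rw [ne_eq, Fin.ext_iff] at hb
      simp only at hb
      rw [if_neg hb, sub_self]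
    · simp
  linarith

lemma rCh_even_s11 (l i : ℕ) (hl : 2 ≤ l) : (diagJ l (2 * i)).rCh = 3 := by
  rw [rCh_eq _ _ (by rw [jn_even l i hl]; omega), Finset.sum_eq_zero, sub_zero]
  intro w _
  rw [if_neg (by omega)]

lemma rCh_odd_s11 (l i : ℕ) (hl : 2 ≤ l) : (diagJ l (2 * i + 1)).rCh = 2 := by
  have hn := jn_odd l i hl
  rw [rCh_eq _ _ (by omega), Finset.sum_eq_single ⟨l + i + 1, by omega⟩]
  · rw [if_pos (by simp only; omega)]
    have : (diagJ l (2 * i + 1)).wt ⟨l + i + 1, by omega⟩ = 1 := by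
      change jwt l (2 * i + 1) (l + i + 1) = 1
      unfold jwt; rw [if_neg (by omega), if_neg (by omega)]
    rw [this]; norm_num
  · intro b _ hb
    rw [ne_eq, Fin.ext_iff] at hb
    simp only at hb
    rw [if_neg (by omega)]
  · simp

end PreDiagram

open PreDiagram in
/-- Characters of the diagrams `J_{l,2i}` and `J_{l,2i+1}` for `l ≥ 2`, `i ≥ 0`
(Table 2-1). -/
theorem statement11 (l i : ℕ) (hl : 2 ≤ l) :
    ((diagJ l (2 * i)).cod = 2 * (i : ℤ) - 1 + 5 * (l : ℤ) ∧
     (diagJ l (2 * i)).degD = 3 * i + 6 * l ∧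
     (diagJ l (2 * i)).dimD = i + 1 + l ∧
     (diagJ l (2 * i)).rCh = 3 ∧
     (diagJ l (2 * i)).deltaD = i + 3 * l ∧
     (diagJ l (2 * i)).mu = 2 * (i : ℤ) - 2 + 6 * (l : ℤ)) ∧
    ((diagJ l (2 * i + 1)).cod = 2 * (i : ℤ) + 5 * (l : ℤ) ∧
     (diagJ l (2 * i + 1)).degD = 3 * i + 2 + 6 * l ∧
     (diagJ l (2 * i + 1)).dimD = i + 2 + l ∧
     (diagJ l (2 * i + 1)).rCh = 2 ∧
     (diagJ l (2 * i + 1)).deltaD = i + 3 * l ∧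
     (diagJ l (2 * i + 1)).mu = 2 * (i : ℤ) - 1 + 6 * (l : ℤ)) := by
  have c4 : Nat.choose 4 2 = 6 := rfl
  have c3 : Nat.choose 3 2 = 3 := rfl
  have c2 : Nat.choose 2 2 = 1 := rfl
  have c1 : Nat.choose 1 2 = 0 := rfl
  have degE : (diagJ l (2 * i)).degD = 3 * i + 6 * l := by
    have := sum_even_s11 l i hl (fun m => (m + 1).choose 2)
    simp only [Nat.reduceAdd, c4, c3] at this
    rw [degD, this]; ring
  have degO : (diagJ l (2 * i + 1)).degD = 3 * i + 2 + 6 * l := by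
    have := sum_odd_s11 l i hl (fun m => (m + 1).choose 2)
    simp only [Nat.reduceAdd, c4, c3, c2] at this
    rw [degD, this]; ring
  have delE : (diagJ l (2 * i)).deltaD = i + 3 * l := by
    have := sum_even_s11 l i hl (fun m => m.choose 2)
    simp only [c3, c2] at this
    rw [deltaD, this]; ring
  have delO : (diagJ l (2 * i + 1)).deltaD = i + 3 * l := by
    have := sum_odd_s11 l i hl (fun m => m.choose 2)
    simp only [c3, c2, c1] at this
    rw [deltaD, this]; ring
  have rE := rts_eq l (2 * i) (by rw [jn_even l i hl]; omega)
  have rO := rts_eq l (2 * i + 1) (by rw [jn_odd l i hl]; omega)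
  have dimE : (diagJ l (2 * i)).dimD = i + 1 + l := by
    rw [dimD, rE, frs_even_s11 l i hl]; ring
  have dimO : (diagJ l (2 * i + 1)).dimD = i + 2 + l := by
    rw [dimD, rO, frs_odd_s11 l i hl]; ring
  refine ⟨⟨?_, degE, dimE, rCh_even_s11 l i hl, delE, ?_⟩, ?_, degO, dimO, rCh_odd_s11 l i hl, delO, ?_⟩
  · rw [cod, degE, dimE]; push_cast; ring
  · rw [mu, delE, rCh_even_s11 l i hl, rE]; push_cast; ring
  · rw [cod, degO, dimO]; push_cast; ring
  · rw [mu, delO, rCh_odd_s11 l i hl, rO]; push_cast; ring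
end
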